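/- arXiv:2303.12768 — 6 statements merged into one kernel-verified Lean document; each statement's English description precedes it below -/
import Mathlib

section
/- Let G be a finite undirected unweighted simple graph, let c be a vertex of G, and let r1 < r2 < r be positive integers with 0 < r1. Then there exists an integer d with r1 < d ≤ r2 such that |ball_G^=(c, d) ∪ ball_G^=(c, d+1)| ≤ 2 · |ball_G(c, r)| / (r2 − r1). -/
/-- The ball of radius `r` around `c` in the graph `G`. -/
def gball {V : Type} (G : SimpleGraph V) (c : V) (r : ℕ) : Set V :=
  {v | G.edist c v ≤ (r : ℕ∞)}

/-- The boundary (sphere) of radius `r` around `c` in the graph `G`. -/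
def gsphere {V : Type} (G : SimpleGraph V) (c : V) (r : ℕ) : Set V :=
  {v | G.edist c v = (r : ℕ∞)}

theorem sum_gsphere_le {V : Type} [Fintype V] (G : SimpleGraph V) (c : V) (r : ℕ)
    (T : Finset ℕ) (hT : ∀ d ∈ T, d ≤ r) :
    ∑ d ∈ T, (gsphere G c d).ncard ≤ (gball G c r).ncard := by
  classical
  have h : ∀ d, (gsphere G c d).ncard = (gsphere G c d).toFinset.card :=
    fun d => Set.ncard_eq_toFinset_card' _
  simp_rw [h]
  rw [← Finset.card_biUnion, Set.ncard_eq_toFinset_card']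
  · apply Finset.card_le_card
    intro v hv
    simp only [Finset.mem_biUnion, Set.mem_toFinset] at hv ⊢
    obtain ⟨d, hd, hv⟩ := hv
    have hv' : G.edist c v = (d : ℕ∞) := hv
    change G.edist c v ≤ (r : ℕ∞)
    rw [hv']
    exact_mod_cast hT d hd
  · intro a _ b _ hab
    refine Finset.disjoint_left.2 ?_
    intro v hva hvb
    simp only [Set.mem_toFinset] at hva hvb
    have ha : G.edist c v = (a : ℕ∞) := hva
    have hb : G.edist c v = (b : ℕ∞) := hvb
    rw [ha] at hb
    exact hab (by exact_mod_cast hb)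

/-- **Bottleneck lemma.** For any graph `G`, vertex `c`, and positive integers
`r1 < r2 < r`, there is an integer `d` with `r1 < d ≤ r2` such that
`|ball^=(c, d) ∪ ball^=(c, d+1)| ≤ 2 · |ball(c, r)| / (r2 − r1)`. -/
theorem bottleneck (V : Type) [Fintype V] (G : SimpleGraph V) (c : V)
    (r1 r2 r : ℕ) (h0 : 0 < r1) (h12 : r1 < r2) (h2r : r2 < r) :
    ∃ d : ℕ, r1 < d ∧ d ≤ r2 ∧
      ((gsphere G c d ∪ gsphere G c (d + 1)).ncard : ℝ) ≤
        2 * ((gball G c r).ncard : ℝ) / ((r2 : ℝ) - (r1 : ℝ)) := by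
  by_contra! hcon
  have hpos : (0 : ℝ) < (r2 : ℝ) - r1 := by
    have : (r1 : ℝ) < r2 := by exact_mod_cast h12
    linarith
  have e1 := sum_gsphere_le G c r (Finset.Ioc r1 r2)
    (fun d hd => by have := Finset.mem_Ioc.1 hd; omega)
  have e2 := sum_gsphere_le G c r ((Finset.Ioc r1 r2).map (addRightEmbedding 1))
    (fun d hd => by
      simp only [Finset.mem_map, Finset.mem_Ioc, addRightEmbedding_apply] at hd
      obtain ⟨a, ha, rfl⟩ := hd
      omega)
  rw [Finset.sum_map] at e2
  simp only [addRightEmbedding_apply] at e2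
  have e3 : ∑ d ∈ Finset.Ioc r1 r2, (gsphere G c d ∪ gsphere G c (d + 1)).ncard
      ≤ 2 * (gball G c r).ncard := by
    calc _ ≤ ∑ d ∈ Finset.Ioc r1 r2, ((gsphere G c d).ncard + (gsphere G c (d + 1)).ncard) :=
          Finset.sum_le_sum fun d _ => Set.ncard_union_le _ _
      _ ≤ _ := by rw [Finset.sum_add_distrib]; omega
  have e4 : ∑ d ∈ Finset.Ioc r1 r2, (2 * ((gball G c r).ncard : ℝ) / ((r2 : ℝ) - (r1 : ℝ)))
      < ∑ d ∈ Finset.Ioc r1 r2, ((gsphere G c d ∪ gsphere G c (d + 1)).ncard : ℝ) := by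
    apply Finset.sum_lt_sum_of_nonempty
    · exact ⟨r2, Finset.mem_Ioc.2 ⟨h12, le_rfl⟩⟩
    · intro d hd
      have := Finset.mem_Ioc.1 hd
      exact hcon d this.1 this.2
  rw [Finset.sum_const, Nat.card_Ioc, nsmul_eq_mul, Nat.cast_sub h12.le,
    mul_div_cancel₀ _ hpos.ne'] at e4
  have e5 : (∑ d ∈ Finset.Ioc r1 r2, ((gsphere G c d ∪ gsphere G c (d + 1)).ncard : ℝ))
      ≤ 2 * (gball G c r).ncard := by exact_mod_cast e3
  linarith
end

section
/- There exists an absolute constant C such that: for every finite undirected unweighted simple graph G on n vertices, every finite set P of pairs of vertices of G, and every consistent collection Π of shortest paths in G that contains, for each pair (s,t) ∈ P, a shortest path π_{s,t} from s to t, the total number of distinct edges appearing in the paths {π_{s,t} : (s,t) ∈ P} is at most C · (n + √n · |P|). -/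
/-- A walk `w` is a (contiguous) subwalk of a walk `p` if `p` is obtained by
prepending and appending walks to `w`. -/
def IsSubwalk {V : Type} {G : SimpleGraph V} {x y a b : V}
    (w : G.Walk x y) (p : G.Walk a b) : Prop :=
  ∃ (p₁ : G.Walk a x) (p₂ : G.Walk y b), p = p₁.append (w.append p₂)

/-- Two paths are consistent if their intersection is either empty or a
contiguous subpath of both (possibly traversed in reverse in the second). -/
def ConsistentPair {V : Type} {G : SimpleGraph V} {a b a' b' : V}
    (p : G.Walk a b) (q : G.Walk a' b') : Prop :=
  (∀ v : V, v ∈ p.support → v ∉ q.support) ∨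
  ∃ (x y : V) (w : G.Walk x y),
    IsSubwalk w p ∧ (IsSubwalk w q ∨ IsSubwalk w.reverse q) ∧
    ∀ v : V, (v ∈ p.support ∧ v ∈ q.support) ↔ v ∈ w.support

open Classical in
/-- Counting core: each index `i` assigns to each vertex at most two neighbours, and
any two indices disagree at at most two common vertices. -/
theorem dp_count {V ι : Type} [Fintype V] [Fintype ι] (A : ι → V → Finset V)
    (h2 : ∀ i v, (A i v).card ≤ 2)
    (hb : ∀ i j, ∃ x y : V, ∀ v, v ≠ x → v ≠ y → (A i v).Nonempty → (A j v).Nonempty →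
      A i v = A j v) :
    (∑ v, (Finset.univ.biUnion (fun i => A i v)).card) ^ 2 ≤
      Fintype.card V * (2 * (∑ v, (Finset.univ.biUnion (fun i => A i v)).card)
        + 8 * Fintype.card ι ^ 2) := by
  set N : V → Finset V := fun v => Finset.univ.biUnion (fun i => A i v) with hN
  have hcs : (∑ v, (N v).card) ^ 2 ≤ Fintype.card V * ∑ v, (N v).card ^ 2 := by
    simpa using sq_sum_le_card_mul_sum_sq (s := (Finset.univ : Finset V)) (f := fun v => (N v).card)
  refine hcs.trans (Nat.mul_le_mul_left _ ?_)
  -- the assignment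
  let r := Fintype.equivFin ι
  have hex : ∀ v u, ∃ i : ι ⊕ Unit, u ∈ N v → ∃ j, i = Sum.inl j ∧ u ∈ A j v ∧
      ∀ k, u ∈ A k v → r j ≤ r k := by
    intro v u
    by_cases hu : u ∈ N v
    · obtain ⟨i, -, hi⟩ := Finset.mem_biUnion.1 hu
      obtain ⟨j, hj, hm⟩ := Finset.exists_min_image (Finset.univ.filter (fun k => u ∈ A k v)) r
        ⟨i, by simpa using hi⟩
      exact ⟨Sum.inl j, fun _ => ⟨j, rfl, by simpa using hj, fun k hk => hm k (by simpa using hk)⟩⟩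
    · exact ⟨Sum.inr (), fun h => absurd h hu⟩
  choose f hf using hex
  let B : V → Finset (V × V) := fun v => (N v ×ˢ N v).filter (fun z => f v z.1 = f v z.2)
  let C : V → Finset (V × V) := fun v => (N v ×ˢ N v).filter (fun z => ¬ f v z.1 = f v z.2)
  have hsplit : ∀ v, (N v).card ^ 2 = (B v).card + (C v).card := by
    intro v
    rw [sq, ← Finset.card_product]
    exact (Finset.card_filter_add_card_filter_not _).symm
  have hB : ∀ v, (B v).card ≤ 2 * (N v).card := by
    intro v
    rw [mul_comm]
    have : B v ⊆ (N v).biUnion (fun u => ((N v).filter (fun w => f v u = f v w)).image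
        (fun w => (u, w))) := by
      rintro ⟨a, b⟩ h
      simp only [B, Finset.mem_filter, Finset.mem_product] at h
      simp only [Finset.mem_biUnion, Finset.mem_image, Finset.mem_filter]
      exact ⟨a, h.1.1, b, ⟨h.1.2, h.2⟩, rfl⟩
    refine (Finset.card_le_card this).trans (Finset.card_biUnion_le_card_mul _ _ _ ?_)
    intro u hu
    refine Finset.card_image_le.trans ?_
    obtain ⟨j, hj, -, -⟩ := hf v u hu
    refine (Finset.card_le_card ?_).trans (h2 j v)
    intro w hw
    simp only [Finset.mem_filter] at hw
    obtain ⟨k, hk, hk2, -⟩ := hf v w hw.1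
    have : j = k := by
      have := hj.symm.trans (hw.2.trans hk)
      simpa using this
    rw [this]; exact hk2
  choose X Y hXY using hb
  have hC : ∑ v, (C v).card ≤ 8 * Fintype.card ι ^ 2 := by
    rw [← Finset.card_sigma]
    have : (Finset.univ.sigma C) ⊆ (Finset.univ : Finset (ι × ι)).biUnion (fun ij =>
        ({X ij.1 ij.2, Y ij.1 ij.2} : Finset V).sigma (fun v => A ij.1 v ×ˢ A ij.2 v)) := by
      rintro ⟨v, a, b⟩ h
      simp only [C, Finset.mem_sigma, Finset.mem_univ, true_and, Finset.mem_filter,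
        Finset.mem_product] at h
      obtain ⟨⟨ha, hb⟩, hne⟩ := h
      obtain ⟨i, hi, hia, him⟩ := hf v a ha
      obtain ⟨j, hj, hjb, hjm⟩ := hf v b hb
      have hij : i ≠ j := by
        rintro rfl; exact hne (hi.trans hj.symm)
      simp only [Finset.mem_biUnion, Finset.mem_univ, true_and, Finset.mem_sigma,
        Finset.mem_product, Finset.mem_insert, Finset.mem_singleton]
      refine ⟨(i, j), ?_, hia, hjb⟩
      by_contra! hc
      have he := hXY i j v hc.1 hc.2 ⟨a, hia⟩ ⟨b, hjb⟩
      exact hij (r.injective (le_antisymm (him j (he ▸ hia)) (hjm i (he ▸ hjb))))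
    refine (Finset.card_le_card this).trans ?_
    refine (Finset.card_biUnion_le_card_mul _ _ 8 ?_).trans ?_
    · rintro ⟨i, j⟩ -
      rw [Finset.card_sigma]
      have h1 : ∀ v ∈ ({X i j, Y i j} : Finset V), (A i v ×ˢ A j v).card ≤ 4 := by
        intro v _
        rw [Finset.card_product]
        exact Nat.mul_le_mul (h2 i v) (h2 j v)
      refine (Finset.sum_le_card_nsmul _ _ _ h1).trans ?_
      have := Finset.card_le_two (a := X i j) (b := Y i j)
      simp only [smul_eq_mul]; omega
    · simp [Finset.card_univ, sq, mul_comm]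
  calc ∑ v, (N v).card ^ 2 = ∑ v, (B v).card + ∑ v, (C v).card := by
        rw [← Finset.sum_add_distrib]; exact Finset.sum_congr rfl (fun v _ => hsplit v)
    _ ≤ _ := by
        refine Nat.add_le_add ?_ hC
        rw [Finset.mul_sum]
        exact Finset.sum_le_sum (fun v _ => hB v)

theorem dp_sub {V : Type} {G : SimpleGraph V} {x y a b : V}
    {w : G.Walk x y} {p : G.Walk a b} (hp : p.IsPath) (h : IsSubwalk w p) {v u : V}
    (hv : v ∈ w.support) (hx : v ≠ x) (hy : v ≠ y) :
    s(v, u) ∈ p.edges ↔ s(v, u) ∈ w.edges := by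
  obtain ⟨p₁, p₂, rfl⟩ := h
  simp only [SimpleGraph.Walk.edges_append, List.mem_append]
  refine ⟨?_, fun h => Or.inr (Or.inl h)⟩
  have hwp : (w.append p₂).IsPath := hp.of_append_right
  have hn2 := hwp.support_nodup
  rw [SimpleGraph.Walk.support_append] at hn2
  have hn1 := hp.support_nodup
  rw [SimpleGraph.Walk.support_append, List.nodup_append] at hn1
  rw [List.nodup_append] at hn2
  rintro (h | h | h)
  · exfalso
    have h1 := p₁.fst_mem_support_of_mem_edges h
    have h3 : v ∈ (w.append p₂).support := SimpleGraph.Walk.mem_support_append_iff _ _ |>.2 (Or.inl hv)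
    rcases (SimpleGraph.Walk.mem_support_iff _).1 h3 with h4 | h4
    · exact hx h4
    · exact hn1.2.2 v h1 v h4 rfl
  · exact h
  · exfalso
    have h1 := p₂.fst_mem_support_of_mem_edges h
    rcases (SimpleGraph.Walk.mem_support_iff _).1 h1 with h4 | h4
    · exact hy h4
    · exact hn2.2.2 v hv v h4 rfl

theorem dp_branch {V : Type} {G : SimpleGraph V} {a b a' b' : V}
    {p : G.Walk a b} {q : G.Walk a' b'} (hp : p.IsPath) (hq : q.IsPath)
    (h : ConsistentPair p q) :
    ∃ x y : V, ∀ v, v ≠ x → v ≠ y → v ∈ p.support → v ∈ q.support → ∀ u,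
      (s(v, u) ∈ p.edges ↔ s(v, u) ∈ q.edges) := by
  rcases h with h | ⟨x, y, w, h1, h2, h3⟩
  · exact ⟨a, a, fun v _ _ h1 h2 => absurd h2 (h v h1)⟩
  · refine ⟨x, y, fun v hx hy hvp hvq u => ?_⟩
    have hv := (h3 v).1 ⟨hvp, hvq⟩
    rw [dp_sub hp h1 hv hx hy]
    rcases h2 with h2 | h2
    · rw [dp_sub hq h2 hv hx hy]
    · rw [dp_sub hq h2 (by simpa using hv) hy hx]
      simp

open Classical in
theorem dp_two {V : Type} [Fintype V] {G : SimpleGraph V} {a b : V}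
    {p : G.Walk a b} (hp : p.IsPath) (v : V) :
    (Finset.univ.filter (fun u => s(v, u) ∈ p.edges)).card ≤ 2 := by
  induction p with
  | nil => simp
  | @cons a c b hadj p ih =>
    rw [SimpleGraph.Walk.cons_isPath_iff] at hp
    by_cases hva : v = a
    · subst hva
      refine (Finset.card_le_card (t := {c}) ?_).trans (by simp)
      intro u hu
      simp only [Finset.mem_filter, Finset.mem_univ, true_and, SimpleGraph.Walk.edges_cons,
        List.mem_cons] at hu
      rcases hu with hu | hu
      · simp only [Finset.mem_singleton]
        exact Sym2.congr_right.1 hu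
      · exact absurd (p.fst_mem_support_of_mem_edges hu) hp.2
    by_cases hvc : v = c
    · subst hvc
      -- neighbours of the start vertex in the tail
      have key : ∀ {c b : V} (q : G.Walk c b), q.IsPath → ∀ u, s(c, u) ∈ q.edges → u = q.snd := by
        intro c b q hq u hu
        cases q with
        | nil => simp at hu
        | cons h q =>
          rw [SimpleGraph.Walk.cons_isPath_iff] at hq
          simp only [SimpleGraph.Walk.edges_cons, List.mem_cons] at hu
          rcases hu with hu | hu
          · simpa using Sym2.congr_right.1 hu
          · exact absurd (q.fst_mem_support_of_mem_edges hu) hq.2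
      refine (Finset.card_le_card (t := {a, p.snd}) ?_).trans Finset.card_le_two
      intro u hu
      simp only [Finset.mem_filter, Finset.mem_univ, true_and, SimpleGraph.Walk.edges_cons,
        List.mem_cons] at hu
      simp only [Finset.mem_insert, Finset.mem_singleton]
      rcases hu with hu | hu
      · left
        rw [Sym2.eq_swap (a := a)] at hu
        exact Sym2.congr_right.1 hu
      · right; exact key p hp.1 u hu
    · refine (Finset.card_le_card ?_).trans (ih hp.1)
      intro u hu
      simp only [Finset.mem_filter, Finset.mem_univ, true_and, SimpleGraph.Walk.edges_cons,
        List.mem_cons] at hu ⊢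
      rcases hu with hu | hu
      · rw [Sym2.eq_iff] at hu
        tauto
      · exact hu

/-- **Distance preservers (Coppersmith–Elkin).** There is an absolute constant
`C` such that: for every finite simple graph `G` on `n` vertices, every finite
set `P` of pairs of vertices, and every consistent family of shortest paths
`π_{s,t}` for `(s,t) ∈ P`, the total number of distinct edges appearing in the
paths is at most `C · (n + √n · |P|)`. -/
theorem distance_preserver :
    ∃ C : ℝ, 0 < C ∧
      ∀ (V : Type) [Fintype V] (G : SimpleGraph V) (P : Finset (V × V))
        (π : ∀ p ∈ P, G.Walk p.1 p.2),
        (∀ p (hp : p ∈ P), (π p hp).IsPath ∧ (π p hp).length = G.dist p.1 p.2) →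
        (∀ p (hp : p ∈ P) q (hq : q ∈ P), ConsistentPair (π p hp) (π q hq)) →
        (({e : Sym2 V | ∃ p, ∃ hp : p ∈ P, e ∈ (π p hp).edges}).ncard : ℝ) ≤
          C * ((Fintype.card V : ℝ) +
            Real.sqrt (Fintype.card V) * (P.card : ℝ)) := by
  classical
  refine ⟨5, by norm_num, ?_⟩
  intro V _ G P π hpath hcons
  let A : {p // p ∈ P} → V → Finset V := fun i v =>
    Finset.univ.filter (fun u => s(v, u) ∈ (π i.1 i.2).edges)
  have hmain := dp_count A (fun i v => dp_two (hpath i.1 i.2).1 v) (by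
    intro i j
    obtain ⟨x, y, h⟩ := dp_branch (hpath i.1 i.2).1 (hpath j.1 j.2).1 (hcons i.1 i.2 j.1 j.2)
    refine ⟨x, y, fun v hx hy ⟨a, ha⟩ ⟨b, hb⟩ => ?_⟩
    simp only [A, Finset.mem_filter, Finset.mem_univ, true_and] at ha hb
    ext u
    simp only [A, Finset.mem_filter, Finset.mem_univ, true_and]
    exact h v hx hy ((π i.1 i.2).fst_mem_support_of_mem_edges ha)
      ((π j.1 j.2).fst_mem_support_of_mem_edges hb) u)
  rw [Fintype.card_coe] at hmain
  set D := ∑ v, (Finset.univ.biUnion (fun i => A i v)).card with hD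
  have hED : ({e : Sym2 V | ∃ p, ∃ hp : p ∈ P, e ∈ (π p hp).edges}).ncard ≤ D := by
    rw [hD, ← Finset.card_sigma]
    have hsub : {e : Sym2 V | ∃ p, ∃ hp : p ∈ P, e ∈ (π p hp).edges} ⊆
        (((Finset.univ.sigma (fun v => Finset.univ.biUnion (fun i => A i v))).image
          (fun z => s(z.1, z.2)) : Finset (Sym2 V)) : Set (Sym2 V)) := by
      rintro e ⟨p, hp, he⟩
      induction e with
      | _ v u =>
        simp only [Finset.coe_image, Set.mem_image, Finset.mem_coe, Finset.mem_sigma,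
          Finset.mem_univ, true_and, Finset.mem_biUnion]
        exact ⟨⟨v, u⟩, ⟨⟨p, hp⟩, by simpa [A] using he⟩, rfl⟩
    refine (Set.ncard_le_ncard hsub (Finset.finite_toSet _)).trans ?_
    rw [Set.ncard_coe_finset]
    exact Finset.card_image_le
  have hED' : (({e : Sym2 V | ∃ p, ∃ hp : p ∈ P, e ∈ (π p hp).edges}).ncard : ℝ) ≤ D := by
    exact_mod_cast hED
  refine hED'.trans ?_
  have hm : (D : ℝ) ^ 2 ≤ Fintype.card V * (2 * D + 8 * (P.card : ℝ) ^ 2) := by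
    exact_mod_cast hmain
  have hs := Real.sq_sqrt (Nat.cast_nonneg (α := ℝ) (Fintype.card V))
  have hs0 := Real.sqrt_nonneg (Fintype.card V : ℝ)
  set n : ℝ := (Fintype.card V : ℝ)
  set t := Real.sqrt n
  have hn : 0 ≤ n := Nat.cast_nonneg _
  have hP : (0 : ℝ) ≤ P.card := Nat.cast_nonneg _
  have hd : (0 : ℝ) ≤ D := Nat.cast_nonneg _
  have htP : 0 ≤ t * P.card := mul_nonneg hs0 hP
  have h1 : ((D : ℝ) - n) ^ 2 ≤ (n + 3 * (t * P.card)) ^ 2 := by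
    have : (t * (P.card : ℝ)) ^ 2 = n * (P.card : ℝ) ^ 2 := by rw [mul_pow, hs]
    nlinarith [mul_nonneg hn htP, mul_nonneg hn (sq_nonneg (P.card : ℝ))]
  have h2 := abs_le_of_sq_le_sq' h1 (by positivity)
  linarith [h2.2]
end

section
/- There exists an absolute constant C such that: for every connected finite undirected unweighted simple graph G on n vertices and every subset S of its vertices, there exists a consistent collection Π of paths in G containing, for each pair s, t ∈ S, a shortest path π_{s,t} from s to t, such that the total number of distinct edges appearing in the paths of Π is at most C · (n + √n · |S|²). -/
open Finset

namespace CSP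

/-- The total weight of the vertices of a walk, vertex `v` having weight `2 ^ idx v`. -/
def wt {V : Type} {G : SimpleGraph V} (idx : V → ℕ) {u v : V} (p : G.Walk u v) : ℕ :=
  (p.support.map (fun x => 2 ^ idx x)).sum

/-- Shortest walks of least weight. -/
def Opt {V : Type} {G : SimpleGraph V} (idx : V → ℕ) {u v : V} (p : G.Walk u v) : Prop :=
  p.length = G.dist u v ∧ ∀ q : G.Walk u v, q.length = G.dist u v → wt idx p ≤ wt idx q

variable {V : Type} {G : SimpleGraph V} {idx : V → ℕ}

theorem wt_append {u v w : V} (p : G.Walk u v) (q : G.Walk v w) :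
    wt idx (p.append q) + 2 ^ idx v = wt idx p + wt idx q := by
  unfold wt
  rw [SimpleGraph.Walk.support_append, List.map_append, List.sum_append]
  conv_rhs => rw [← SimpleGraph.Walk.cons_tail_support q]
  simp only [List.map_cons, List.sum_cons]
  omega

theorem wt_reverse {u v : V} (p : G.Walk u v) : wt idx p.reverse = wt idx p := by
  unfold wt
  rw [SimpleGraph.Walk.support_reverse, List.map_reverse, List.sum_reverse]

theorem exists_opt (hG : G.Connected) (u v : V) : ∃ p : G.Walk u v, Opt idx p := by
  classical
  obtain ⟨p, hp⟩ := hG.exists_walk_length_eq_dist u v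
  have hex : ∃ n, ∃ p : G.Walk u v, p.length = G.dist u v ∧ wt idx p = n := ⟨_, p, hp, rfl⟩
  obtain ⟨q, hq, hq2⟩ := Nat.find_spec hex
  exact ⟨q, hq, fun r hr => hq2 ▸ Nat.find_min' hex ⟨r, hr, rfl⟩⟩

theorem Opt.reverse {u v : V} {p : G.Walk u v} (h : Opt idx p) : Opt idx p.reverse := by
  refine ⟨by rw [SimpleGraph.Walk.length_reverse, h.1, SimpleGraph.dist_comm], fun q hq => ?_⟩
  rw [wt_reverse, ← wt_reverse q]
  exact h.2 _ (by rw [SimpleGraph.Walk.length_reverse, hq, SimpleGraph.dist_comm])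

theorem Opt.left (hG : G.Connected) {u v w : V} {p : G.Walk u v} {q : G.Walk v w}
    (h : Opt idx (p.append q)) : Opt idx p := by
  have h1 := h.1
  rw [SimpleGraph.Walk.length_append] at h1
  have h2 := SimpleGraph.dist_le p
  have h3 := SimpleGraph.dist_le q
  have h4 := hG.dist_triangle (u := u) (v := v) (w := w)
  refine ⟨by omega, fun r hr => ?_⟩
  have h5 := h.2 (r.append q) (by rw [SimpleGraph.Walk.length_append]; omega)
  have h6 := wt_append (idx := idx) p q
  have h7 := wt_append (idx := idx) r q
  omega

theorem Opt.right (hG : G.Connected) {u v w : V} {p : G.Walk u v} {q : G.Walk v w}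
    (h : Opt idx (p.append q)) : Opt idx q := by
  have h1 := h.reverse
  rw [SimpleGraph.Walk.reverse_append] at h1
  simpa using (h1.left hG).reverse

theorem Opt.isPath {u v : V} {p : G.Walk u v} (h : Opt idx p) : p.IsPath :=
  p.isPath_of_length_eq_dist h.1

theorem split1 {u v : V} (p : G.Walk u v) : ∀ i ≤ p.length,
    ∃ (x : V) (a : G.Walk u x) (b : G.Walk x v), p = a.append b ∧ a.length = i := by
  induction p with
  | nil => intro i hi; exact ⟨_, .nil, .nil, rfl, by simp at hi; simp [hi]⟩
  | @cons u w v h p ih =>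
    intro i hi
    cases i with
    | zero => exact ⟨_, .nil, .cons h p, rfl, rfl⟩
    | succ i =>
      obtain ⟨x, a, b, hab, ha⟩ := ih i (by simpa using hi)
      exact ⟨x, .cons h a, b, by rw [hab]; rfl, by simp [ha]⟩

theorem split2 {u v : V} (p : G.Walk u v) (i j : ℕ) (hij : i ≤ j) (hj : j ≤ p.length) :
    ∃ (x y : V) (a : G.Walk u x) (w : G.Walk x y) (b : G.Walk y v),
      p = a.append (w.append b) ∧ a.length = i ∧ w.length = j - i := by
  obtain ⟨x, a, b, hab, ha⟩ := split1 p i (hij.trans hj)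
  have hl : p.length = a.length + b.length := by rw [hab, SimpleGraph.Walk.length_append]
  obtain ⟨y, w, c, hwc, hw⟩ := split1 b (j - i) (by omega)
  exact ⟨x, y, a, w, c, by rw [hab, hwc], ha, hw⟩

theorem getVert_split {u x y v : V} (a : G.Walk u x) (w : G.Walk x y) (b : G.Walk y v) (k : ℕ)
    (h1 : a.length ≤ k) (h2 : k ≤ a.length + w.length) :
    (a.append (w.append b)).getVert k = w.getVert (k - a.length) := by
  rw [SimpleGraph.Walk.getVert_append, if_neg (by omega), SimpleGraph.Walk.getVert_append']
  rw [if_pos (by omega)]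

theorem dist_getVert (hG : G.Connected) {u v : V} (p : G.Walk u v) (hp : p.length = G.dist u v)
    (k : ℕ) (hk : k ≤ p.length) : G.dist u (p.getVert k) = k := by
  obtain ⟨x, a, b, hab, ha⟩ := split1 p k hk
  have hx : p.getVert k = x := by
    rw [hab, SimpleGraph.Walk.getVert_append, if_neg (by omega), ha]; simp
  have hl : p.length = a.length + b.length := by rw [hab, SimpleGraph.Walk.length_append]
  rw [hx]
  have h2 := SimpleGraph.dist_le a
  have h3 := SimpleGraph.dist_le b
  have h4 := hG.dist_triangle (u := u) (v := x) (w := v)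
  omega

theorem wt_eq [DecidableEq V] (hi : Function.Injective idx) {u v : V} {p : G.Walk u v}
    (hp : p.IsPath) : wt idx p = ∑ i ∈ p.support.toFinset.image idx, 2 ^ i := by
  rw [Finset.sum_image (fun a _ b _ h => hi h), List.sum_toFinset _ hp.support_nodup]
  rfl

theorem Opt.unique (hG : G.Connected) (hi : Function.Injective idx) {u v : V} {p q : G.Walk u v}
    (hp : Opt idx p) (hq : Opt idx q) : p = q := by
  classical
  have h := le_antisymm (hp.2 q hq.1) (hq.2 p hp.1)
  rw [wt_eq hi hp.isPath, wt_eq hi hq.isPath] at h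
  have h2 := Finset.image_injective hi (Finset.geomSum_injective (n := 2) le_rfl h)
  apply SimpleGraph.Walk.ext_getVert_le_length (hp.1.trans hq.1.symm)
  intro k hk
  have hm : p.getVert k ∈ q.support := by
    have := p.getVert_mem_support k
    rwa [← List.mem_toFinset, h2, List.mem_toFinset] at this
  obtain ⟨m, hm, hml⟩ := SimpleGraph.Walk.mem_support_iff_exists_getVert.1 hm
  have e1 := dist_getVert hG p hp.1 k hk
  have e2 := dist_getVert hG q hq.1 m hml
  rw [hm, e1] at e2
  rw [← hm, e2]

theorem consistent (hG : G.Connected) (hi : Function.Injective idx) {a b a' b' : V}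
    {p : G.Walk a b} {q : G.Walk a' b'} (hp : Opt idx p) (hq : Opt idx q) :
    ConsistentPair p q := by
  classical
  by_cases hdis : ∀ v : V, v ∈ p.support → v ∉ q.support
  · exact Or.inl hdis
  right
  push Not at hdis
  obtain ⟨v, hv, hvq⟩ := hdis
  let I : Finset ℕ := (Finset.range (p.length + 1)).filter (fun i => p.getVert i ∈ q.support)
  have hI : I.Nonempty := by
    obtain ⟨m, hm, hml⟩ := SimpleGraph.Walk.mem_support_iff_exists_getVert.1 hv
    exact ⟨m, by simp [I, hm, hvq]; omega⟩
  have hmin := I.min'_mem hI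
  have hmax := I.max'_mem hI
  have hmm : I.min' hI ≤ I.max' hI := I.min'_le _ hmax
  have hle : ∀ k, k ≤ p.length → p.getVert k ∈ q.support → I.min' hI ≤ k ∧ k ≤ I.max' hI := by
    intro k hk hkq
    have : k ∈ I := by simp [I, hkq]; omega
    exact ⟨I.min'_le _ this, I.le_max' _ this⟩
  generalize I.min' hI = i at *
  generalize I.max' hI = j at *
  simp only [I, Finset.mem_filter, Finset.mem_range] at hmin hmax
  obtain ⟨x, y, p1, w, p2, hpe, h1, h2⟩ := split2 p i j hmm (by omega)
  have hx : x ∈ q.support := by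
    have := hmin.2
    rw [hpe, getVert_split _ _ _ _ (by omega) (by omega)] at this
    simpa [h1] using this
  have hy : y ∈ q.support := by
    have := hmax.2
    rw [hpe, getVert_split _ _ _ _ (by omega) (by omega), h1, ← h2] at this
    simpa using this
  have hwo : Opt idx w := by
    rw [hpe] at hp
    exact (hp.right hG).left hG
  have hsub : IsSubwalk w q ∨ IsSubwalk w.reverse q := by
    obtain ⟨m, hm, hml⟩ := SimpleGraph.Walk.mem_support_iff_exists_getVert.1 hx
    obtain ⟨n, hn, hnl⟩ := SimpleGraph.Walk.mem_support_iff_exists_getVert.1 hy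
    rcases le_total m n with hmn | hmn
    · left
      obtain ⟨x', y', q1, w', q2, hqe, g1, g2⟩ := split2 q m n hmn hnl
      have hx' : x' = x := by
        rw [hqe, getVert_split _ _ _ _ (by omega) (by omega)] at hm
        simpa [g1] using hm
      have hy' : y' = y := by
        rw [hqe, getVert_split _ _ _ _ (by omega) (by omega), g1, ← g2] at hn
        simpa using hn
      subst hx' hy'
      rw [hqe] at hq
      have := ((hq.right hG).left hG).unique hG hi hwo
      subst this
      exact ⟨q1, q2, hqe⟩
    · right
      obtain ⟨x', y', q1, w', q2, hqe, g1, g2⟩ := split2 q n m hmn hml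
      have hx' : x' = y := by
        rw [hqe, getVert_split _ _ _ _ (by omega) (by omega)] at hn
        simpa [g1] using hn
      have hy' : y' = x := by
        rw [hqe, getVert_split _ _ _ _ (by omega) (by omega), g1, ← g2] at hm
        simpa using hm
      subst hx' hy'
      rw [hqe] at hq
      have := ((hq.right hG).left hG).unique hG hi hwo.reverse
      subst this
      exact ⟨q1, q2, hqe⟩
  refine ⟨x, y, w, ⟨p1, p2, hpe⟩, hsub, fun z => ⟨?_, ?_⟩⟩
  · rintro ⟨hz, hzq⟩
    obtain ⟨k, hk, hkl⟩ := SimpleGraph.Walk.mem_support_iff_exists_getVert.1 hz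
    have := hle k hkl (by rw [hk]; exact hzq)
    rw [hpe, getVert_split _ _ _ _ (by omega) (by omega)] at hk
    rw [← hk]
    exact SimpleGraph.Walk.getVert_mem_support _ _
  · intro hz
    refine ⟨by rw [hpe]; simp [SimpleGraph.Walk.mem_support_append_iff, hz], ?_⟩
    rcases hsub with ⟨q1, q2, h⟩ | ⟨q1, q2, h⟩ <;> rw [h] <;>
      simp [SimpleGraph.Walk.mem_support_append_iff, hz]

/-- A vertex has at most two incident edges on a path. -/
theorem two_nbrs {u v : V} (p : G.Walk u v) (hp : p.IsPath) (x : V) :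
    ∃ y1 y2 : V, ∀ y, s(x, y) ∈ p.edges → y = y1 ∨ y = y2 := by
  classical
  by_cases hx : x ∈ p.support
  · refine ⟨(p.takeUntil x hx).penultimate, (p.dropUntil x hx).snd, fun y hy => ?_⟩
    rw [← p.take_spec hx, SimpleGraph.Walk.edges_append, List.mem_append] at hy
    rcases hy with hy | hy
    · exact Or.inl ((hp.takeUntil hx).eq_penultimate_of_mem_edges hy)
    · exact Or.inr ((hp.dropUntil hx).eq_snd_of_mem_edges hy)
  · exact ⟨x, x, fun y hy => absurd (p.fst_mem_support_of_mem_edges hy) hx⟩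

theorem two_branch_aux {a b x y : V} {q : G.Walk a b} (hq : q.IsPath) {w : G.Walk x y}
    (h : IsSubwalk w q) : ∃ c1 c2 : V × V, ∀ v z, v ∈ w.support → s(v, z) ∈ q.edges →
      s(v, z) ∉ w.edges → (v, z) = c1 ∨ (v, z) = c2 := by
  obtain ⟨q1, q2, rfl⟩ := h
  refine ⟨(x, q1.penultimate), (y, q2.snd), fun v z hv hz hn => ?_⟩
  have hq' := hq
  rw [SimpleGraph.Walk.append_assoc] at hq'
  have hq1 := hq.of_append_left
  have hq2 := hq.of_append_right.of_append_right
  rw [SimpleGraph.Walk.edges_append, SimpleGraph.Walk.edges_append, List.mem_append,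
    List.mem_append] at hz
  rcases hz with hz | hz | hz
  · left
    have hvx : v = x := by
      by_contra hne
      have h1 := q1.fst_mem_support_of_mem_edges hz
      have h2 := hq.support_nodup
      rw [SimpleGraph.Walk.support_append, List.nodup_append] at h2
      refine h2.2.2 v h1 v ?_ rfl
      rw [SimpleGraph.Walk.tail_support_append, List.mem_append]
      left
      rw [SimpleGraph.Walk.mem_support_iff] at hv
      exact hv.resolve_left hne
    subst hvx
    rw [hq1.eq_penultimate_of_mem_edges hz]
  · exact absurd hz hn
  · right
    have hvy : v = y := by
      by_contra hne
      have h1 := q2.fst_mem_support_of_mem_edges hz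
      have h2 := hq.of_append_right.support_nodup
      rw [SimpleGraph.Walk.support_append, List.nodup_append] at h2
      refine h2.2.2 v hv v ?_ rfl
      rw [SimpleGraph.Walk.mem_support_iff] at h1
      exact h1.resolve_left hne
    subst hvy
    rw [hq2.eq_snd_of_mem_edges hz]

/-- Two consistent paths branch at most twice. -/
theorem two_branch {a b a' b' : V} {p : G.Walk a b} {q : G.Walk a' b'}
    (hq : q.IsPath) (h : ConsistentPair p q) :
    ∃ c1 c2 : V × V, ∀ x z, x ∈ p.support → s(x, z) ∈ q.edges → s(x, z) ∉ p.edges →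
      (x, z) = c1 ∨ (x, z) = c2 := by
  rcases h with h | ⟨x, y, w, ⟨p1, p2, hp⟩, hw, hs⟩
  · exact ⟨(a, a), (a, a), fun x z hx hz _ =>
      absurd (q.fst_mem_support_of_mem_edges hz) (h x hx)⟩
  · have hsub : ∀ e, e ∉ p.edges → e ∉ w.edges := by
      intro e he hew
      apply he
      rw [hp]
      simp [SimpleGraph.Walk.edges_append, hew]
    rcases hw with hw | hw
    · obtain ⟨c1, c2, hc⟩ := two_branch_aux hq hw
      exact ⟨c1, c2, fun v z hv hz hn =>
        hc v z ((hs v).1 ⟨hv, q.fst_mem_support_of_mem_edges hz⟩) hz (hsub _ hn)⟩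
    · obtain ⟨c1, c2, hc⟩ := two_branch_aux hq hw
      exact ⟨c1, c2, fun v z hv hz hn =>
        hc v z (by simpa using (hs v).1 ⟨hv, q.fst_mem_support_of_mem_edges hz⟩) hz
          (by simpa using hsub _ hn)⟩

/-- Counting step. -/
theorem count [Fintype V] (S : Finset V) (π : (s t : V) → G.Walk s t)
    (hpath : ∀ s ∈ S, ∀ t ∈ S, (π s t).IsPath)
    (hcon : ∀ s ∈ S, ∀ t ∈ S, ∀ s' ∈ S, ∀ t' ∈ S, ConsistentPair (π s t) (π s' t')) :
    ∃ D : ℕ, ({e : Sym2 V | ∃ s ∈ S, ∃ t ∈ S, e ∈ (π s t).edges}).ncard ≤ D ∧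
      D ^ 2 ≤ Fintype.card V * (2 * D + 8 * (S.card * S.card) ^ 2) := by
  classical
  set E : Set (Sym2 V) := {e : Sym2 V | ∃ s ∈ S, ∃ t ∈ S, e ∈ (π s t).edges} with hE
  let r : V × V → ℕ := fun x => (Fintype.equivFin (V × V) x : ℕ)
  have hr : ∀ x y, r x = r y → x = y := fun x y h =>
    (Fintype.equivFin (V × V)).injective (Fin.ext h)
  have hown : ∀ e : Sym2 V, ∃ o : V × V, e ∈ E → (o ∈ S ×ˢ S ∧ e ∈ (π o.1 o.2).edges ∧
      ∀ o' ∈ S ×ˢ S, r o' < r o → e ∉ (π o'.1 o'.2).edges) := by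
    intro e
    by_cases he : e ∈ E
    · obtain ⟨s, hs, t, ht, hst⟩ := he
      obtain ⟨o, ho, hmin⟩ := Finset.exists_min_image
        ((S ×ˢ S).filter (fun o : V × V => e ∈ (π o.1 o.2).edges)) r ⟨(s, t), by simp [hs, ht, hst]⟩
      rw [Finset.mem_filter] at ho
      refine ⟨o, fun _ => ⟨ho.1, ho.2, fun o' ho' hlt hm => ?_⟩⟩
      have := hmin o' (Finset.mem_filter.2 ⟨ho', hm⟩)
      omega
    · obtain ⟨x, -⟩ : ∃ x : V, x ∈ e := ⟨_, Sym2.out_fst_mem e⟩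
      exact ⟨(x, x), fun h => absurd h he⟩
  choose o ho using hown
  let N : V → Finset V := fun x => Finset.univ.filter (fun y => s(x, y) ∈ E)
  let D : Finset (Σ _ : V, V) := Finset.univ.sigma N
  let T : Finset (Σ _ : V, V × V) := Finset.univ.sigma (fun x => N x ×ˢ N x)
  have hD : D.card = ∑ x, (N x).card := Finset.card_sigma _ _
  have hT : T.card = ∑ x, (N x).card ^ 2 := by
    rw [Finset.card_sigma]; simp [Finset.card_product, sq]
  have hmemT : ∀ t : (Σ _ : V, V × V), t ∈ T ↔ s(t.1, t.2.1) ∈ E ∧ s(t.1, t.2.2) ∈ E := by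
    intro t; simp [T, N]
  let A := T.filter (fun t => o s(t.1, t.2.1) = o s(t.1, t.2.2))
  let B := T.filter (fun t => r (o s(t.1, t.2.1)) < r (o s(t.1, t.2.2)))
  let B' := T.filter (fun t => r (o s(t.1, t.2.2)) < r (o s(t.1, t.2.1)))
  have hA : A.card ≤ 2 * D.card := by
    apply Finset.card_le_mul_card_image_of_maps_to (f := fun t => (⟨t.1, t.2.1⟩ : Σ _ : V, V))
    · intro t ht
      have := (hmemT t).1 (Finset.mem_filter.1 ht).1
      simp [D, N, this.1]
    · rintro ⟨x, y⟩ hxy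
      have hxy' : s(x, y) ∈ E := by simpa [D, N] using hxy
      have hoe := ho _ hxy'
      have hm := Finset.mem_product.1 hoe.1
      obtain ⟨y1, y2, hy⟩ := two_nbrs _ (hpath _ hm.1 _ hm.2) x
      refine (Finset.card_le_card (t := {⟨x, (y, y1)⟩, ⟨x, (y, y2)⟩}) ?_).trans
        Finset.card_le_two
      rintro ⟨x', y', z⟩ ht
      simp only [A, Finset.mem_filter, hmemT, Sigma.mk.injEq, heq_eq_eq] at ht
      obtain ⟨⟨⟨h1, h2⟩, h3⟩, rfl, rfl⟩ := ht
      have h4 := (ho _ h2).2.1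
      rw [← h3] at h4
      rcases hy z h4 with rfl | rfl <;> simp
  have hB : B.card ≤ 4 * ((S ×ˢ S) ×ˢ (S ×ˢ S)).card := by
    apply Finset.card_le_mul_card_image_of_maps_to
      (f := fun t => (o s(t.1, t.2.1), o s(t.1, t.2.2)))
    · intro t ht
      have := (hmemT t).1 (Finset.mem_filter.1 ht).1
      exact Finset.mem_product.2 ⟨(ho _ this.1).1, (ho _ this.2).1⟩
    · rintro ⟨P, Q⟩ hPQ
      obtain ⟨hP, hQ⟩ := Finset.mem_product.1 hPQ
      have hP2 := Finset.mem_product.1 hP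
      have hQ2 := Finset.mem_product.1 hQ
      obtain ⟨c1, c2, hc⟩ := two_branch (hpath _ hQ2.1 _ hQ2.2)
        (hcon _ hP2.1 _ hP2.2 _ hQ2.1 _ hQ2.2)
      obtain ⟨y1, y2, hy⟩ := two_nbrs _ (hpath _ hP2.1 _ hP2.2) c1.1
      obtain ⟨y3, y4, hy'⟩ := two_nbrs _ (hpath _ hP2.1 _ hP2.2) c2.1
      refine (Finset.card_le_card (t := {⟨c1.1, (y1, c1.2)⟩, ⟨c1.1, (y2, c1.2)⟩,
        ⟨c2.1, (y3, c2.2)⟩, ⟨c2.1, (y4, c2.2)⟩}) ?_).trans Finset.card_le_four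
      rintro ⟨x, y, z⟩ ht
      simp only [B, Finset.mem_filter, hmemT, Prod.mk.injEq] at ht
      obtain ⟨⟨⟨h1, h2⟩, h3⟩, h4, h5⟩ := ht
      have k1 := (ho _ h1).2.1
      have k2 := (ho _ h2).2
      rw [h4] at k1
      rw [h5] at k2
      rw [h4, h5] at h3
      rcases hc x z ((π P.1 P.2).fst_mem_support_of_mem_edges k1) k2.1 (k2.2 P hP h3) with h | h
      · subst h
        rcases hy y k1 with rfl | rfl <;> simp
      · subst h
        rcases hy' y k1 with rfl | rfl <;> simp
  have hB' : B'.card ≤ B.card := by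
    apply Finset.card_le_card_of_injOn (fun t => ⟨t.1, (t.2.2, t.2.1)⟩)
    · rintro ⟨x, y, z⟩ ht
      simp only [B', B, Finset.coe_filter, Set.mem_ofPred_eq, hmemT] at ht ⊢
      exact ⟨ht.1.symm, ht.2⟩
    · rintro ⟨x, y, z⟩ - ⟨x', y', z'⟩ - h
      simp only [Sigma.mk.injEq, heq_eq_eq, Prod.mk.injEq] at h ⊢
      tauto
  have hcover : T ⊆ A ∪ (B ∪ B') := by
    intro t ht
    simp only [A, B, B', Finset.mem_union, Finset.mem_filter, ht, true_and]
    rcases lt_trichotomy (r (o s(t.1, t.2.1))) (r (o s(t.1, t.2.2))) with h | h | h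
    · exact Or.inr (Or.inl h)
    · exact Or.inl (hr _ _ h)
    · exact Or.inr (Or.inr h)
  have hTc : T.card ≤ 2 * D.card + 8 * (S.card * S.card) ^ 2 := by
    have h1 := Finset.card_le_card hcover
    have h2 := Finset.card_union_le A (B ∪ B')
    have h3 := Finset.card_union_le B B'
    have h4 : ((S ×ˢ S) ×ˢ (S ×ˢ S)).card = (S.card * S.card) ^ 2 := by
      simp [Finset.card_product, sq]
    rw [h4] at hB
    omega
  refine ⟨D.card, ?_, ?_⟩
  · have : E ⊆ ((D.image (fun d => s(d.1, d.2)) : Finset (Sym2 V)) : Set (Sym2 V)) := by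
      intro e he
      induction e using Sym2.ind with
      | _ x y =>
        rw [Finset.coe_image]
        exact ⟨⟨x, y⟩, by simp [D, N, he], rfl⟩
    refine (Set.ncard_le_ncard this (Finset.finite_toSet _)).trans ?_
    rw [Set.ncard_coe_finset]
    exact Finset.card_image_le
  · calc D.card ^ 2 = (∑ x, (N x).card) ^ 2 := by rw [hD]
      _ ≤ (Finset.univ : Finset V).card * ∑ x, (N x).card ^ 2 := sq_sum_le_card_mul_sum_sq
      _ = Fintype.card V * T.card := by rw [hT, Finset.card_univ]
      _ ≤ _ := Nat.mul_le_mul_left _ hTc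

theorem final_bound (n k D : ℝ) (hn : 0 ≤ n) (hk : 0 ≤ k)
    (h : D ^ 2 ≤ n * (2 * D + 8 * k ^ 2)) : D ≤ 4 * (n + Real.sqrt n * k) := by
  by_contra hlt
  push Not at hlt
  have hs := Real.sqrt_nonneg n
  have hss := Real.sq_sqrt hn
  set s := Real.sqrt n
  have h0 : 0 ≤ s * k := by positivity
  have h1 : (4 * (s * k)) * (4 * (s * k)) < D * (D - 2 * n) :=
    mul_lt_mul'' (by linarith) (by linarith) (by linarith) (by linarith)
  have h2 : (4 * (s * k)) * (4 * (s * k)) = 16 * n * k ^ 2 := by rw [← hss]; ring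
  nlinarith [mul_nonneg hn (sq_nonneg k)]

end CSP


/-- **Consistent shortest paths for a subset.** There is an absolute constant
`C` such that: for every connected finite simple graph `G` on `n` vertices and
every subset `S` of its vertices, there is a consistent family of shortest
paths `π_{s,t}` for `s, t ∈ S` whose total number of distinct edges is at most
`C · (n + √n · |S|²)`. -/
theorem consistent_shortest_paths :
    ∃ C : ℝ, 0 < C ∧
      ∀ (V : Type) [Fintype V] (G : SimpleGraph V), G.Connected →
        ∀ S : Finset V,
          ∃ π : (s t : V) → G.Walk s t,
            (∀ s ∈ S, ∀ t ∈ S, (π s t).IsPath ∧ (π s t).length = G.dist s t) ∧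
            (∀ s ∈ S, ∀ t ∈ S, ∀ s' ∈ S, ∀ t' ∈ S,
              ConsistentPair (π s t) (π s' t')) ∧
            (({e : Sym2 V | ∃ s ∈ S, ∃ t ∈ S, e ∈ (π s t).edges}).ncard : ℝ) ≤
              C * ((Fintype.card V : ℝ) +
                Real.sqrt (Fintype.card V) * (S.card : ℝ) ^ 2) := by
  refine ⟨4, by norm_num, ?_⟩
  intro V _ G hG S
  have hi : Function.Injective (fun x : V => (Fintype.equivFin V x : ℕ)) := fun x y h =>
    (Fintype.equivFin V).injective (Fin.ext h)
  choose π hπ using fun s t : V =>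
    CSP.exists_opt (idx := fun x : V => (Fintype.equivFin V x : ℕ)) hG s t
  have hcon : ∀ s ∈ S, ∀ t ∈ S, ∀ s' ∈ S, ∀ t' ∈ S, ConsistentPair (π s t) (π s' t') :=
    fun s _ t _ s' _ t' _ => CSP.consistent hG hi (hπ s t) (hπ s' t')
  refine ⟨π, fun s _ t _ => ⟨(hπ s t).isPath, (hπ s t).1⟩, hcon, ?_⟩
  obtain ⟨D, h1, h2⟩ := CSP.count S π (fun s _ t _ => (hπ s t).isPath) hcon
  have h3 : (D : ℝ) ≤ 4 * ((Fintype.card V : ℝ) +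
      Real.sqrt (Fintype.card V) * (S.card : ℝ) ^ 2) := by
    apply CSP.final_bound _ _ _ (by positivity) (by positivity)
    rw [sq (S.card : ℝ)]
    exact_mod_cast h2
  exact le_trans (by exact_mod_cast h1) h3
end

section
/- There exists an absolute constant C such that: for every finite undirected unweighted simple graph G on n vertices and every finite set P of pairs of vertices of G, there is a subgraph H ⊆ G with at most C · n · |P|^(1/4) edges such that for every pair (s,t) ∈ P with s, t connected in G, dist_H(s,t) ≤ dist_G(s,t) + 6. -/
namespace PairSpanner

open Finset

/-- `v` is reachable from `u` by an `H`-walk of length at most `k`. -/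
def Near {V : Type} (H : SimpleGraph V) (u v : V) (k : ℕ) : Prop :=
  ∃ p : H.Walk u v, p.length ≤ k

lemma Near.mono {V : Type} {H H' : SimpleGraph V} (h : H ≤ H') {u v : V} {k l : ℕ}
    (hkl : k ≤ l) (hn : Near H u v k) : Near H' u v l := by
  obtain ⟨p, hp⟩ := hn
  exact ⟨p.mapLe h, by simpa using hp.trans hkl⟩

lemma Near.trans {V : Type} {H : SimpleGraph V} {u v w : V} {k l : ℕ}
    (h1 : Near H u v k) (h2 : Near H v w l) : Near H u w (k + l) := by
  obtain ⟨p, hp⟩ := h1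
  obtain ⟨q, hq⟩ := h2
  exact ⟨p.append q, by rw [SimpleGraph.Walk.length_append]; omega⟩

lemma Near.symm {V : Type} {H : SimpleGraph V} {u v : V} {k : ℕ}
    (h1 : Near H u v k) : Near H v u k := by
  obtain ⟨p, hp⟩ := h1
  exact ⟨p.reverse, by simpa using hp⟩

lemma Near.dist_le {V : Type} {H : SimpleGraph V} {u v : V} {k : ℕ}
    (h1 : Near H u v k) : H.dist u v ≤ k := by
  obtain ⟨p, hp⟩ := h1
  exact (SimpleGraph.dist_le p).trans hp

lemma near_dist {V : Type} {H : SimpleGraph V} {u v : V} (h : H.Reachable u v) :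
    Near H u v (H.dist u v) := by
  obtain ⟨p, hp⟩ := h.exists_walk_length_eq_dist
  exact ⟨p, hp.le⟩

lemma near_adj {V : Type} {H : SimpleGraph V} {u v : V} (h : H.Adj u v) : Near H u v 1 :=
  ⟨h.toWalk, by simp⟩

lemma near_seg {V : Type} {H : SimpleGraph V} (r : ℕ → V) (i n : ℕ)
    (h : ∀ x, i ≤ x → x < i + n → H.Adj (r x) (r (x + 1))) : Near H (r i) (r (i + n)) n := by
  induction n with
  | zero => exact ⟨SimpleGraph.Walk.nil, by simp⟩
  | succ n ih =>
    exact (ih fun x h1 h2 => h x h1 (by omega)).trans (near_adj (h (i + n) (by omega) (by omega)))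

lemma near_seg' {V : Type} {H : SimpleGraph V} (r : ℕ → V) (i j : ℕ) (hij : i ≤ j)
    (h : ∀ x, i ≤ x → x < j → H.Adj (r x) (r (x + 1))) : Near H (r i) (r j) (j - i) := by
  have := near_seg (H := H) r i (j - i) (fun x h1 h2 => h x h1 (by omega))
  rwa [Nat.add_sub_cancel' hij] at this

/-- Splitting a finite set of naturals into a prefix, a middle part and a suffix. -/
lemma split (M : Finset ℕ) (k : ℕ) : ∃ L Mid R : Finset ℕ,
    M = L ∪ Mid ∪ R ∧ L.card ≤ k ∧ R.card ≤ k ∧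
    (∀ l ∈ L, ∀ m ∈ Mid, l < m) ∧ (∀ m ∈ Mid, ∀ r ∈ R, m < r) ∧
    (Mid.Nonempty → L.card = k ∧ R.card = k) := by
  induction k with
  | zero => exact ⟨∅, M, ∅, by simp, by simp, by simp, by simp, by simp, by simp⟩
  | succ k ih =>
    obtain ⟨L, Mid, R, hM, hL, hR, h1, h2, h3⟩ := ih
    by_cases hne : Mid.Nonempty
    · obtain ⟨h4, h5⟩ := h3 hne
      have ha := Mid.min'_mem hne
      have hb := Mid.max'_mem hne
      set a := Mid.min' hne with hadef
      set b := Mid.max' hne with hbdef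
      have haL : a ∉ L := fun h => lt_irrefl _ (h1 a h a ha)
      have hbR : b ∉ R := fun h => lt_irrefl _ (h2 b hb b h)
      have hamin : ∀ m ∈ Mid, a ≤ m := fun m hm => Mid.min'_le m hm
      have hbmax : ∀ m ∈ Mid, m ≤ b := fun m hm => Mid.le_max' m hm
      refine ⟨insert a L, (Mid.erase a).erase b, insert b R, ?_, ?_, ?_, ?_, ?_, ?_⟩
      · ext x
        rw [hM]
        simp only [mem_union, mem_insert, mem_erase]
        by_cases hxa : x = a
        · subst hxa; tauto
        · by_cases hxb : x = b
          · subst hxb; tauto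
          · tauto
      · rw [card_insert_of_notMem haL]; omega
      · rw [card_insert_of_notMem hbR]; omega
      · intro l hl m hm
        simp only [mem_insert, mem_erase] at hl hm
        rcases hl with rfl | hl
        · exact lt_of_le_of_ne (hamin m hm.2.2) (Ne.symm hm.2.1)
        · exact h1 l hl m hm.2.2
      · intro m hm l hl
        simp only [mem_insert, mem_erase] at hl hm
        rcases hl with rfl | hl
        · exact lt_of_le_of_ne (hbmax m hm.2.2) hm.1
        · exact h2 m hm.2.2 l hl
      · intro _
        rw [card_insert_of_notMem haL, card_insert_of_notMem hbR]; omega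
    · exact ⟨L, Mid, R, hM, by omega, by omega, h1, h2, fun h => absurd h hne⟩

lemma card_le_three (S : Finset ℕ) (h : ∀ i ∈ S, ∀ j ∈ S, j ≤ i + 2) : S.card ≤ 3 := by
  by_cases hne : S.Nonempty
  · have : S ⊆ Finset.Icc (S.min' hne) (S.min' hne + 2) := fun x hx =>
      mem_Icc.2 ⟨S.min'_le x hx, h _ (S.min'_mem hne) x hx⟩
    have := card_le_card this
    simp at this
    omega
  · simp [not_nonempty_iff_eq_empty.1 hne]

open Classical in
/-- Triples (centre, centre, slack) not yet satisfied by `H`. -/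
noncomputable def bad {V : Type} (G : SimpleGraph V) (Z : Finset V) (H : SimpleGraph V) :
    Finset (V × V × ℕ) :=
  (Z ×ˢ Z ×ˢ range 5).filter (fun q => ¬ Near H q.1 q.2.1 (G.dist q.1 q.2.1 + q.2.2))

lemma bad_card {V : Type} (G : SimpleGraph V) (Z : Finset V) (H : SimpleGraph V) :
    (bad G Z H).card ≤ 5 * Z.card ^ 2 := by
  classical
  refine (card_filter_le _ _).trans ?_
  simp only [card_product, card_range]
  nlinarith

lemma drop {V : Type} (G : SimpleGraph V) (Z : Finset V) (H H' : SimpleGraph V) (hH : H ≤ H')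
    (I J : Finset ℕ) (u w : ℕ → V) (d : ℕ → ℕ → ℕ)
    (hu : ∀ i ∈ I, u i ∈ Z) (hw : ∀ j ∈ J, w j ∈ Z)
    (hfu : ∀ i ∈ I, ∀ j ∈ I, u i = u j → j ≤ i + 2)
    (hfw : ∀ i ∈ J, ∀ j ∈ J, w i = w j → j ≤ i + 2)
    (h1 : ∀ i ∈ I, ∀ j ∈ J, ¬ Near H (u i) (w j) (d i j + 2))
    (h2 : ∀ i ∈ I, ∀ j ∈ J, Near H' (u i) (w j) (d i j + 2))
    (h3 : ∀ i ∈ I, ∀ j ∈ J, G.dist (u i) (w j) ≤ d i j + 2)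
    (h4 : ∀ i ∈ I, ∀ j ∈ J, d i j ≤ G.dist (u i) (w j) + 2) :
    I.card * J.card + 9 * (bad G Z H').card ≤ 9 * (bad G Z H).card := by
  classical
  have hsub : bad G Z H' ⊆ bad G Z H := by
    intro q hq
    simp only [bad, mem_filter] at hq ⊢
    exact ⟨hq.1, fun h => hq.2 (h.mono hH le_rfl)⟩
  let F : ℕ × ℕ → V × V × ℕ := fun x =>
    (u x.1, w x.2, d x.1 x.2 + 2 - G.dist (u x.1) (w x.2))
  have him : (I ×ˢ J).image F ⊆ bad G Z H \ bad G Z H' := by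
    intro q hq
    obtain ⟨⟨i, j⟩, hij, rfl⟩ := mem_image.1 hq
    obtain ⟨hi, hj⟩ := mem_product.1 hij
    have e := h3 i hi j hj
    have e' := h4 i hi j hj
    simp only at hi hj
    simp only [bad, F, mem_sdiff, mem_filter, mem_product, mem_range, not_and, not_not]
    rw [Nat.add_sub_cancel' e]
    exact ⟨⟨⟨hu i hi, hw j hj, by omega⟩, h1 i hi j hj⟩, fun _ => h2 i hi j hj⟩
  have hcard : (I ×ˢ J).card ≤ 9 * ((I ×ˢ J).image F).card := by
    apply card_le_mul_card_image
    rintro ⟨x, y, m⟩ -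
    have hs : {a ∈ I ×ˢ J | F a = (x, y, m)} ⊆
        (I.filter (fun i => u i = x)) ×ˢ (J.filter (fun j => w j = y)) := by
      rintro ⟨i, j⟩ ha
      simp only [F, mem_filter, mem_product, Prod.mk.injEq] at ha ⊢
      tauto
    refine (card_le_card hs).trans ?_
    rw [card_product]
    have a1 : (I.filter (fun i => u i = x)).card ≤ 3 := by
      apply card_le_three
      intro i hi j hj
      simp only [mem_filter] at hi hj
      exact hfu i hi.1 j hj.1 (hi.2.trans hj.2.symm)
    have a2 : (J.filter (fun j => w j = y)).card ≤ 3 := by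
      apply card_le_three
      intro i hi j hj
      simp only [mem_filter] at hi hj
      exact hfw i hi.1 j hj.1 (hi.2.trans hj.2.symm)
    nlinarith
  have h5 := card_le_card him
  rw [card_sdiff_of_subset hsub] at h5
  have h6 := card_le_card hsub
  rw [card_product] at hcard
  omega

lemma pair_lemma {V : Type} [Fintype V] (G Hc : SimpleGraph V) (hHc : Hc ≤ G) (Z : Finset V)
    (K : V → Prop) (z : V → V)
    (hedge : ∀ u v, G.Adj u v → ¬ Hc.Adj u v → K u ∧ K v)
    (hz : ∀ v, K v → z v ∈ Z ∧ Hc.Adj (z v) v) (k : ℕ) (s t : V) (hst : G.Reachable s t) :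
    ∃ E : Finset (Sym2 V), E.card ≤ 2 * k ∧ (E : Set (Sym2 V)) ⊆ G.edgeSet ∧
      ∀ H : SimpleGraph V, Hc ≤ H → H ≤ G → (E : Set (Sym2 V)) ⊆ H.edgeSet →
        Near H s t (G.dist s t + 6) ∨
        ∃ (H' : SimpleGraph V) (m : ℕ), H ≤ H' ∧ H' ≤ G ∧ 0 < m ∧
          H'.edgeSet.ncard ≤ H.edgeSet.ncard + m ∧
          m * (k + 1) + 18 * (bad G Z H').card ≤ 18 * (bad G Z H).card := by
  classical
  obtain ⟨p, hp⟩ := hst.exists_walk_length_eq_dist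
  set D := G.dist s t with hD
  obtain ⟨r, hr⟩ : ∃ r : ℕ → V, r = p.getVert := ⟨_, rfl⟩
  have r0 : r 0 = s := by rw [hr]; simp
  have rD : r D = t := by rw [hr, ← hp]; simp
  have radj : ∀ x, x < D → G.Adj (r x) (r (x + 1)) := by
    intro x hx
    rw [hr]
    exact p.adj_getVert_succ (by omega)
  -- geodesic
  have geo : ∀ i j m, i ≤ D → j ≤ D → Near G (r i) (r j) m → j ≤ i + m := by
    intro i j m hi hj hn
    have a1 := near_seg' (H := G) r 0 i (by omega) (fun x _ h => radj x (by omega))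
    have a2 := near_seg' (H := G) r j D hj (fun x _ h => radj x (by omega))
    have a3 := ((a1.trans hn).trans a2)
    rw [r0, rD] at a3
    have := a3.dist_le
    omega
  have zc : ∀ v, K v → Near G (z v) v 1 := fun v hv => near_adj (hHc (hz v hv).2)
  have fib : ∀ i j, i ≤ D → j ≤ D → K (r i) → K (r j) → z (r i) = z (r j) → j ≤ i + 2 := by
    intro i j hi hj hKi hKj h
    have a1 := zc _ hKi
    have a2 := zc _ hKj
    rw [h] at a1
    exact geo i j 2 hi hj (a1.symm.trans a2)
  have dlo : ∀ i j, i ≤ j → j ≤ D → K (r i) → K (r j) →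
      j - i ≤ G.dist (z (r i)) (z (r j)) + 2 := by
    intro i j hij hj hKi hKj
    have hn := near_seg' (H := G) r i j hij (fun x _ h => radj x (by omega))
    have a0 := ((zc _ hKi).trans hn).trans (zc _ hKj).symm
    obtain ⟨q, -⟩ := a0
    have a1 := near_dist q.reachable
    have a2 := geo i j _ (by omega) hj (((zc _ hKi).symm.trans a1).trans (zc _ hKj))
    omega
  set M := (range D).filter (fun x => ¬ Hc.Adj (r x) (r (x + 1))) with hM
  have memM : ∀ x, x ∈ M ↔ x < D ∧ ¬ Hc.Adj (r x) (r (x + 1)) := by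
    intro x; simp [hM]
  obtain ⟨L, Mid, R, hMu, hL, hR, hLM, hMR, hfull⟩ := split M k
  have subL : ∀ x ∈ L, x ∈ M := fun x hx => by rw [hMu]; simp [hx]
  have subMid : ∀ x ∈ Mid, x ∈ M := fun x hx => by rw [hMu]; simp [hx]
  have subR : ∀ x ∈ R, x ∈ M := fun x hx => by rw [hMu]; simp [hx]
  have KM : ∀ x ∈ M, K (r x) ∧ K (r (x + 1)) := fun x hx =>
    hedge _ _ (radj x ((memM x).1 hx).1) ((memM x).1 hx).2
  let ed : ℕ → Sym2 V := fun x => s(r x, r (x + 1))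
  have edG : ∀ x ∈ M, ed x ∈ G.edgeSet := fun x hx =>
    (SimpleGraph.mem_edgeSet G).2 (radj x ((memM x).1 hx).1)
  refine ⟨(L ∪ R).image ed, ?_, ?_, ?_⟩
  · exact card_image_le.trans ((card_union_le _ _).trans (by omega))
  · intro e he
    simp only [coe_image, Set.mem_image, mem_coe, mem_union] at he
    obtain ⟨x, hx, rfl⟩ := he
    exact edG x (hx.elim (subL x) (subR x))
  intro H hcH hHG hE
  have hLR : ∀ x, x ∈ L ∨ x ∈ R → H.Adj (r x) (r (x + 1)) := by
    intro x hx
    apply (SimpleGraph.mem_edgeSet H).1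
    apply hE
    simp only [coe_image, Set.mem_image, mem_coe, mem_union]
    exact ⟨x, hx, rfl⟩
  have hnotMid : ∀ x, x < D → x ∉ Mid → H.Adj (r x) (r (x + 1)) := by
    intro x hx hxm
    by_cases hc : Hc.Adj (r x) (r (x + 1))
    · exact hcH hc
    · have : x ∈ M := (memM x).2 ⟨hx, hc⟩
      rw [hMu] at this
      simp only [mem_union] at this
      exact hLR x (by tauto)
  by_cases hne : Mid.Nonempty
  swap
  · left
    have := near_seg' (H := H) r 0 D (by omega)
      (fun x _ h => hnotMid x h (by simp [not_nonempty_iff_eq_empty.1 hne]))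
    rw [r0, rD] at this
    exact this.mono le_rfl (by omega)
  obtain ⟨cL, cR⟩ := hfull hne
  have ha := Mid.min'_mem hne
  have hb := Mid.max'_mem hne
  set a0 := Mid.min' hne with hadef
  set b0 := Mid.max' hne with hbdef
  have hamin : ∀ m ∈ Mid, a0 ≤ m := fun m hm => Mid.min'_le m hm
  have hbmax : ∀ m ∈ Mid, m ≤ b0 := fun m hm => Mid.le_max' m hm
  have haL : a0 ∉ L := fun h => lt_irrefl _ (hLM a0 h a0 ha)
  have hbR : b0 ∉ R := fun h => lt_irrefl _ (hMR b0 hb b0 h)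
  set A := insert a0 L with hA
  set B := insert b0 R with hB
  have cA : A.card = k + 1 := by rw [hA, card_insert_of_notMem haL, cL]
  have cB : B.card = k + 1 := by rw [hB, card_insert_of_notMem hbR, cR]
  have A_M : ∀ x ∈ A, x ∈ M := by
    intro x hx
    rcases mem_insert.1 hx with rfl | hx
    · exact subMid _ ha
    · exact subL x hx
  have B_M : ∀ x ∈ B, x ∈ M := by
    intro x hx
    rcases mem_insert.1 hx with rfl | hx
    · exact subMid _ hb
    · exact subR x hx
  have AleMid : ∀ x ∈ A, ∀ c ∈ Mid, x ≤ c := by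
    intro x hx c hc
    rcases mem_insert.1 hx with rfl | hx
    · exact hamin c hc
    · exact (hLM x hx c hc).le
  have MidleB : ∀ c ∈ Mid, ∀ x ∈ B, c ≤ x := by
    intro c hc x hx
    rcases mem_insert.1 hx with rfl | hx
    · exact hbmax c hc
    · exact (hMR c hc x hx).le
  have pre : ∀ a ∈ A, Near H s (r a) a := by
    intro a haA
    have := near_seg' (H := H) r 0 a (by omega) (fun x _ h => hnotMid x
      (by have := ((memM a).1 (A_M a haA)).1; omega)
      (fun hx => by have := AleMid a haA x hx; omega))
    rwa [r0] at this
  have suf : ∀ b ∈ B, Near H (r (b + 1)) t (D - (b + 1)) := by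
    intro b hbB
    have := near_seg' (H := H) r (b + 1) D
      (by have := ((memM b).1 (B_M b hbB)).1; omega) (fun x h h' => hnotMid x h'
      (fun hx => by have := MidleB x hx b hbB; omega))
    rwa [rD] at this
  have zcH : ∀ v, K v → Near H (z v) v 1 := fun v hv => near_adj (hcH (hz v hv).2)
  by_cases hok : ∃ c ∈ Mid, (∃ a ∈ A, Near H (z (r a)) (z (r c)) (c - a + 2)) ∧
      (∃ b ∈ B, Near H (z (r c)) (z (r (b + 1))) (b + 1 - c + 2))
  · left
    obtain ⟨c, hc, ⟨a, haA, h1⟩, ⟨b, hbB, h2⟩⟩ := hok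
    have e1 := pre a haA
    have e2 := (zcH _ (KM a (A_M a haA)).1).symm
    have e3 := zcH _ (KM b (B_M b hbB)).2
    have e4 := suf b hbB
    refine ((((((e1.trans e2).trans h1).trans h2).trans e3).trans e4)).mono le_rfl ?_
    have := AleMid a haA c hc
    have := MidleB c hc b hbB
    have := ((memM b).1 (B_M b hbB)).1
    omega
  right
  push Not at hok
  let H' : SimpleGraph V := H ⊔ SimpleGraph.fromEdgeSet (Mid.image ed : Set (Sym2 V))
  have hHH' : H ≤ H' := le_sup_left
  have hH'G : H' ≤ G := by
    refine sup_le hHG ?_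
    intro x y hxy
    rw [SimpleGraph.fromEdgeSet_adj] at hxy
    obtain ⟨h1, -⟩ := hxy
    simp only [coe_image, Set.mem_image, mem_coe] at h1
    obtain ⟨i, hi, h⟩ := h1
    have := edG i (subMid i hi)
    rw [h] at this
    exact (SimpleGraph.mem_edgeSet G).1 this
  have all' : ∀ x, x < D → H'.Adj (r x) (r (x + 1)) := by
    intro x hx
    by_cases hm : x ∈ Mid
    · apply (le_sup_right : _ ≤ H')
      rw [SimpleGraph.fromEdgeSet_adj]
      refine ⟨?_, (radj x hx).ne⟩
      simp only [coe_image, Set.mem_image, mem_coe]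
      exact ⟨x, hm, rfl⟩
    · exact hHH' (hnotMid x hx hm)
  have near' : ∀ i j, i ≤ j → j ≤ D → K (r i) → K (r j) →
      Near H' (z (r i)) (z (r j)) (j - i + 2) := by
    intro i j hij hj hKi hKj
    have hn := near_seg' (H := H') r i j hij (fun x _ h => all' x (by omega))
    exact ((((zcH _ hKi).mono hHH' le_rfl).trans hn).trans
      (((zcH _ hKj).symm).mono hHH' le_rfl)).mono le_rfl (by omega)
  refine ⟨H', Mid.card, hHH', hH'G, hne.card_pos, ?_, ?_⟩
  · have hs : H'.edgeSet ⊆ H.edgeSet ∪ (Mid.image ed : Set (Sym2 V)) := by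
      rw [SimpleGraph.edgeSet_sup, SimpleGraph.edgeSet_fromEdgeSet]
      exact Set.union_subset_union_right _ Set.sdiff_subset
    refine (Set.ncard_le_ncard hs (Set.toFinite _)).trans ((Set.ncard_union_le _ _).trans ?_)
    rw [Set.ncard_coe_finset]
    have := card_image_le (s := Mid) (f := ed)
    omega
  · let M1 := Mid.filter (fun c => ∀ a ∈ A, ¬ Near H (z (r a)) (z (r c)) (c - a + 2))
    let M2 := Mid.filter (fun c => ¬ ∀ a ∈ A, ¬ Near H (z (r a)) (z (r c)) (c - a + 2))
    have hsum : M1.card + M2.card = Mid.card := card_filter_add_card_filter_not _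
    have m1 : ∀ c ∈ M1, c ∈ Mid ∧ ∀ a ∈ A, ¬ Near H (z (r a)) (z (r c)) (c - a + 2) :=
      fun c hc => mem_filter.1 hc
    have m2 : ∀ c ∈ M2, c ∈ Mid ∧
        ∀ b ∈ B, ¬ Near H (z (r c)) (z (r (b + 1))) (b + 1 - c + 2) := by
      intro c hc
      obtain ⟨h1, h2⟩ := mem_filter.1 hc
      push Not at h2
      exact ⟨h1, hok c h1 h2⟩
    have lt : ∀ x ∈ M, x < D := fun x hx => ((memM x).1 hx).1
    have d1 := drop G Z H H' hHH' A M1 (fun i => z (r i)) (fun i => z (r i)) (fun i j => j - i)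
      (fun i hi => (hz _ (KM i (A_M i hi)).1).1)
      (fun i hi => (hz _ (KM i (subMid i (m1 i hi).1)).1).1)
      (fun i hi j hj => fib i j (lt i (A_M i hi)).le (lt j (A_M j hj)).le
        (KM i (A_M i hi)).1 (KM j (A_M j hj)).1)
      (fun i hi j hj => fib i j (lt i (subMid i (m1 i hi).1)).le (lt j (subMid j (m1 j hj).1)).le
        (KM i (subMid i (m1 i hi).1)).1 (KM j (subMid j (m1 j hj).1)).1)
      (fun i hi j hj => (m1 j hj).2 i hi)
      (fun i hi j hj => near' i j (AleMid i hi j (m1 j hj).1) (lt j (subMid j (m1 j hj).1)).le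
        (KM i (A_M i hi)).1 (KM j (subMid j (m1 j hj).1)).1)
      (fun i hi j hj => ((near' i j (AleMid i hi j (m1 j hj).1)
        (lt j (subMid j (m1 j hj).1)).le
        (KM i (A_M i hi)).1 (KM j (subMid j (m1 j hj).1)).1).mono hH'G le_rfl).dist_le)
      (fun i hi j hj => dlo i j (AleMid i hi j (m1 j hj).1) (lt j (subMid j (m1 j hj).1)).le
        (KM i (A_M i hi)).1 (KM j (subMid j (m1 j hj).1)).1)
    have d2 := drop G Z H H' hHH' M2 B (fun i => z (r i)) (fun i => z (r (i + 1)))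
      (fun i j => j + 1 - i)
      (fun i hi => (hz _ (KM i (subMid i (m2 i hi).1)).1).1)
      (fun i hi => (hz _ (KM i (B_M i hi)).2).1)
      (fun i hi j hj => fib i j (lt i (subMid i (m2 i hi).1)).le (lt j (subMid j (m2 j hj).1)).le
        (KM i (subMid i (m2 i hi).1)).1 (KM j (subMid j (m2 j hj).1)).1)
      (fun i hi j hj h => by
        have := fib (i + 1) (j + 1) (lt i (B_M i hi)) (lt j (B_M j hj))
          (KM i (B_M i hi)).2 (KM j (B_M j hj)).2 h
        omega)
      (fun i hi j hj => (m2 i hi).2 j hj)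
      (fun i hi j hj => near' i (j + 1) ((MidleB i (m2 i hi).1 j hj).trans (Nat.le_succ j))
        (lt j (B_M j hj)) (KM i (subMid i (m2 i hi).1)).1 (KM j (B_M j hj)).2)
      (fun i hi j hj => ((near' i (j + 1) ((MidleB i (m2 i hi).1 j hj).trans (Nat.le_succ j))
        (lt j (B_M j hj)) (KM i (subMid i (m2 i hi).1)).1
        (KM j (B_M j hj)).2).mono hH'G le_rfl).dist_le)
      (fun i hi j hj => dlo i (j + 1) ((MidleB i (m2 i hi).1 j hj).trans (Nat.le_succ j))
        (lt j (B_M j hj)) (KM i (subMid i (m2 i hi).1)).1 (KM j (B_M j hj)).2)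
    rw [cA] at d1
    rw [cB] at d2
    rw [← hsum]
    nlinarith

lemma clustering {V : Type} [Fintype V] (G : SimpleGraph V) (h : ℕ) (hh : 0 < h) :
    ∃ (Hc : SimpleGraph V) (Z : Finset V) (K : V → Prop) (z : V → V), Hc ≤ G ∧
      (∀ u v, G.Adj u v → ¬ Hc.Adj u v → K u ∧ K v) ∧
      (∀ v, K v → z v ∈ Z ∧ Hc.Adj (z v) v) ∧
      Z.card * h ≤ Fintype.card V ∧ Hc.edgeSet.ncard ≤ Fintype.card V * h := by
  classical
  let good : (V → Option V) → Prop := fun f =>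
    (∀ u v, f u = some v → G.Adj v u) ∧
    (∀ v u, f u = some v → h ≤ (univ.filter (fun x => f x = some v)).card)
  let cnt : (V → Option V) → ℕ := fun f => (univ.filter (fun x => f x ≠ none)).card
  obtain ⟨f, hf, hmax⟩ := exists_max_image (univ.filter good) cnt
    ⟨fun _ => none, by simp [good]⟩
  obtain ⟨g1, g2⟩ := (mem_filter.1 hf).2
  have hsmall : ∀ v, (univ.filter (fun u => G.Adj v u ∧ f u = none)).card < h := by
    intro v
    by_contra hcon
    push Not at hcon
    let f' : V → Option V := fun u => if G.Adj v u ∧ f u = none then some v else f u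
    have hf' : good f' := by
      constructor
      · intro u w hw
        simp only [f'] at hw
        split_ifs at hw with hc
        · cases hw; exact hc.1
        · exact g1 u w hw
      · intro w u hw
        by_cases hwv : w = v
        · subst hwv
          refine hcon.trans (card_le_card ?_)
          intro x hx
          simp only [mem_filter, mem_univ, true_and] at hx
          simp [f', hx]
        · have hw' : f u = some w := by
            simp only [f'] at hw
            split_ifs at hw with hc
            · cases hw; exact absurd rfl hwv
            · exact hw
          refine (g2 w u hw').trans (card_le_card ?_)
          intro x hx
          simp only [mem_filter, mem_univ, true_and] at hx
          simp [f', hx]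
    have hle := hmax f' (by simp [hf'])
    have hlt : cnt f < cnt f' := by
      apply card_lt_card
      rw [ssubset_iff_of_subset]
      · obtain ⟨x, hx⟩ : (univ.filter (fun u => G.Adj v u ∧ f u = none)).Nonempty :=
          card_pos.1 (by omega)
        simp only [mem_filter, mem_univ, true_and] at hx
        exact ⟨x, by simp [f', hx], by simp [hx]⟩
      · intro x hx
        simp only [mem_filter, mem_univ, true_and] at hx
        simp only [mem_filter, mem_univ, true_and, f']
        split_ifs <;> simp_all
    omega
  let Hc : SimpleGraph V :=
    { Adj := fun u v => G.Adj u v ∧ (f u = none ∨ f v = none ∨ f u = some v ∨ f v = some u)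
      symm := ⟨fun u v huv => ⟨huv.1.symm, by tauto⟩⟩
      loopless := ⟨fun u hu => G.loopless.irrefl u hu.1⟩ }
  let Z : Finset V := univ.filter (fun v => ∃ u, f u = some v)
  refine ⟨Hc, Z, fun v => f v ≠ none, fun v => (f v).getD v, fun u v huv => huv.1, ?_, ?_, ?_, ?_⟩
  · intro u v huv hn
    have : ¬ (f u = none ∨ f v = none ∨ f u = some v ∨ f v = some u) := fun hc => hn ⟨huv, hc⟩
    tauto
  · intro v hv
    obtain ⟨w, hw⟩ := Option.ne_none_iff_exists'.1 hv
    simp only [hw, Option.getD_some]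
    exact ⟨by simp only [Z, mem_filter, mem_univ, true_and]; exact ⟨v, hw⟩, g1 v w hw, by tauto⟩
  · have hd : (Z : Set V).PairwiseDisjoint (fun v => univ.filter (fun x => f x = some v)) := by
      intro a _ b _ hab
      rw [Function.onFun, Finset.disjoint_left]
      intro x hx hx'
      simp only [mem_filter, mem_univ, true_and] at hx hx'
      rw [hx] at hx'
      exact hab (Option.some.inj hx')
    have h1 := card_biUnion hd
    have h2 : Z.card * h ≤ ∑ v ∈ Z, (univ.filter (fun x => f x = some v)).card := by
      rw [← smul_eq_mul]
      apply card_nsmul_le_sum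
      intro v hv
      simp only [Z, mem_filter, mem_univ, true_and] at hv
      obtain ⟨u, hu⟩ := hv
      exact g2 v u hu
    rw [← h1] at h2
    exact h2.trans (card_le_univ _)
  · let S : Finset (Σ _ : V, V) := univ.sigma
      (fun v => univ.filter (fun u => G.Adj v u ∧ f u = none))
    let T : Finset (Sym2 V) := S.image (fun q => s(q.1, q.2)) ∪
      univ.image (fun u => s(u, (f u).getD u))
    have hs : Hc.edgeSet ⊆ (T : Set (Sym2 V)) := by
      intro e
      induction e using Sym2.ind with
      | _ u v =>
        intro he
        obtain ⟨hg, hc⟩ := (SimpleGraph.mem_edgeSet Hc).1 he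
        simp only [T, S, coe_union, coe_image, Set.mem_union, Set.mem_image, mem_coe, mem_sigma,
          mem_univ, true_and, mem_filter]
        rcases hc with hc | hc | hc | hc
        · exact Or.inl ⟨⟨v, u⟩, ⟨hg.symm, hc⟩, Sym2.eq_swap⟩
        · exact Or.inl ⟨⟨u, v⟩, ⟨hg, hc⟩, rfl⟩
        · exact Or.inr ⟨u, by simp [hc]⟩
        · exact Or.inr ⟨v, by rw [hc]; exact Sym2.eq_swap⟩
    have h1 := Set.ncard_le_ncard hs (Set.toFinite _)
    rw [Set.ncard_coe_finset] at h1
    have h2 : S.card ≤ Fintype.card V * (h - 1) := by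
      rw [card_sigma]
      refine (sum_le_card_nsmul _ _ (h - 1) ?_).trans (by simp)
      intro v _
      have := hsmall v
      omega
    have h3 : T.card ≤ S.card + Fintype.card V := by
      refine (card_union_le _ _).trans (add_le_add card_image_le ?_)
      exact card_image_le.trans (by simp)
    obtain ⟨g, rfl⟩ : ∃ g, h = g + 1 := ⟨h - 1, by omega⟩
    rw [Nat.add_sub_cancel] at h2
    rw [mul_add, mul_one]
    omega

lemma numeric (n q z h k e : ℝ) (hn : 0 ≤ n) (hq : 1 ≤ q) (hz : 0 ≤ z) (hzh : z * h ≤ n)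
    (hh1 : q ≤ h) (hh2 : h ≤ q + 1) (hk0 : 0 ≤ k) (hk1 : k * q ^ 3 ≤ n)
    (hk2 : n ≤ (k + 1) * q ^ 3)
    (he : e ≤ n * h + 2 * k * q ^ 4 + 19 / (k + 1) * (5 * z ^ 2)) : e ≤ 100 * n * q := by
  have hq0 : 0 < q := by linarith
  have a1 : n * h ≤ 2 * (n * q) := by nlinarith
  have a2 : 2 * k * q ^ 4 ≤ 2 * (n * q) := by
    have := mul_le_mul_of_nonneg_right hk1 hq0.le
    nlinarith
  have a3 : 19 / (k + 1) * (5 * z ^ 2) ≤ 95 * (n * q) := by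
    have hk : 0 < k + 1 := by linarith
    rw [div_mul_eq_mul_div, div_le_iff₀ hk]
    have hzq : z * q ≤ n := (mul_le_mul_of_nonneg_left hh1 hz).trans hzh
    have hsq : (z * q) ^ 2 ≤ n * n := by
      have : 0 ≤ z * q := by positivity
      nlinarith
    have h2 : n * n ≤ n * ((k + 1) * q ^ 3) := mul_le_mul_of_nonneg_left hk2 hn
    have h3 : q ^ 2 * z ^ 2 ≤ q ^ 2 * (n * q * (k + 1)) := by nlinarith
    have h4 := le_of_mul_le_mul_left h3 (by positivity)
    nlinarith
  nlinarith

end PairSpanner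

open PairSpanner

/-- **Pairwise `+6` additive spanners (Kavitha).** There is an absolute
constant `C` such that: for every finite simple graph `G` on `n` vertices and
every finite set `P` of pairs of vertices, there is a subgraph `H ⊆ G` with at
most `C · n · |P|^(1/4)` edges such that for every `(s,t) ∈ P` with `s, t`
connected in `G`, `dist_H(s,t) ≤ dist_G(s,t) + 6`. -/
theorem pairwise_plus_six_spanner :
    ∃ C : ℝ, 0 < C ∧
      ∀ (V : Type) [Fintype V] (G : SimpleGraph V) (P : Finset (V × V)),
        ∃ H : SimpleGraph V, H ≤ G ∧
          (H.edgeSet.ncard : ℝ) ≤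
            C * (Fintype.card V : ℝ) * (P.card : ℝ) ^ ((1 : ℝ) / 4) ∧
          ∀ p ∈ P, G.Reachable p.1 p.2 →
            H.Reachable p.1 p.2 ∧
            (H.dist p.1 p.2 : ℝ) ≤ (G.dist p.1 p.2 : ℝ) + 6 := by
  classical
  refine ⟨100, by norm_num, ?_⟩
  intro V _ G P
  by_cases hP : P = ∅
  · subst hP
    exact ⟨⊥, bot_le, by simp, by simp⟩
  have hPc : 1 ≤ P.card := Finset.card_pos.2 (Finset.nonempty_iff_ne_empty.2 hP)
  obtain ⟨q, hqdef⟩ : ∃ q : ℝ, q = (P.card : ℝ) ^ ((1 : ℝ) / 4) := ⟨_, rfl⟩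
  have hq1 : 1 ≤ q := by
    rw [hqdef]
    exact Real.one_le_rpow (by exact_mod_cast hPc) (by norm_num)
  have hq4 : q ^ 4 = (P.card : ℝ) := by
    rw [hqdef, ← Real.rpow_natCast, ← Real.rpow_mul (Nat.cast_nonneg _)]
    norm_num
  rw [← hqdef]
  have hq0 : 0 < q := by linarith
  obtain ⟨h, hh⟩ : ∃ h : ℕ, h = ⌈q⌉₊ := ⟨_, rfl⟩
  have hhpos : 0 < h := by rw [hh]; exact Nat.ceil_pos.2 hq0
  obtain ⟨k, hk⟩ : ∃ k : ℕ, k = ⌊(Fintype.card V : ℝ) / q ^ 3⌋₊ := ⟨_, rfl⟩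
  obtain ⟨Hc, Z, K, z, hHc, hedge, hz, hZ, hHcE⟩ := clustering G h hhpos
  have hpair := pair_lemma G Hc hHc Z K z hedge hz k
  choose E hE1 hE2 hE3 using hpair
  let E' : V × V → Finset (Sym2 V) := fun p =>
    if hp : G.Reachable p.1 p.2 then E p.1 p.2 hp else ∅
  have hE'1 : ∀ p, (E' p).card ≤ 2 * k := by
    intro p
    simp only [E']
    split_ifs with hp
    · exact hE1 _ _ hp
    · simp
  have hE'2 : ∀ p, (E' p : Set (Sym2 V)) ⊆ G.edgeSet := by
    intro p
    simp only [E']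
    split_ifs with hp
    · exact hE2 _ _ hp
    · simp
  let U : Finset (Sym2 V) := P.biUnion E'
  have hUG : (U : Set (Sym2 V)) ⊆ G.edgeSet := by
    intro e he
    obtain ⟨p, -, hp⟩ := Finset.mem_biUnion.1 (Finset.mem_coe.1 he)
    exact hE'2 p hp
  have hUc : U.card ≤ P.card * (2 * k) := Finset.card_biUnion_le_card_mul _ _ _ (fun p _ => hE'1 p)
  let H0 : SimpleGraph V := Hc ⊔ SimpleGraph.fromEdgeSet (U : Set (Sym2 V))
  have hH0G : H0 ≤ G := by
    refine sup_le hHc ?_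
    intro x y hxy
    rw [SimpleGraph.fromEdgeSet_adj] at hxy
    exact (SimpleGraph.mem_edgeSet G).1 (hUG hxy.1)
  have hUH0 : (U : Set (Sym2 V)) ⊆ H0.edgeSet := by
    intro e he
    have heG := hUG he
    induction e using Sym2.ind with
    | _ x y =>
      rw [SimpleGraph.mem_edgeSet]
      apply (le_sup_right : _ ≤ H0)
      rw [SimpleGraph.fromEdgeSet_adj]
      exact ⟨he, ((SimpleGraph.mem_edgeSet G).1 heG).ne⟩
  have hH0c : H0.edgeSet.ncard ≤ Fintype.card V * h + P.card * (2 * k) := by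
    have hs : H0.edgeSet ⊆ Hc.edgeSet ∪ (U : Set (Sym2 V)) := by
      rw [SimpleGraph.edgeSet_sup, SimpleGraph.edgeSet_fromEdgeSet]
      exact Set.union_subset_union_right _ Set.sdiff_subset
    refine (Set.ncard_le_ncard hs (Set.toFinite _)).trans ((Set.ncard_union_le _ _).trans ?_)
    rw [Set.ncard_coe_finset]
    omega
  let cost : SimpleGraph V → ℝ := fun H =>
    (H.edgeSet.ncard : ℝ) + 19 / ((k : ℝ) + 1) * ((bad G Z H).card : ℝ)
  obtain ⟨H, ⟨hH0, hHG⟩, hmin⟩ := Set.exists_min_image {H : SimpleGraph V | H0 ≤ H ∧ H ≤ G} cost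
    (Set.toFinite _) ⟨H0, le_rfl, hH0G⟩
  have hkpos : (0 : ℝ) < (k : ℝ) + 1 := by positivity
  refine ⟨H, hHG, ?_, ?_⟩
  · have hle := hmin H0 ⟨le_rfl, hH0G⟩
    simp only [cost] at hle
    have hq3 : 0 < q ^ 3 := by positivity
    have hb : ((bad G Z H0).card : ℝ) ≤ 5 * (Z.card : ℝ) ^ 2 := by
      exact_mod_cast bad_card G Z H0
    have hb' := mul_le_mul_of_nonneg_left hb (by positivity : (0 : ℝ) ≤ 19 / ((k : ℝ) + 1))
    have hnn : (0 : ℝ) ≤ 19 / ((k : ℝ) + 1) * ((bad G Z H).card : ℝ) := by positivity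
    have hH0c' : (H0.edgeSet.ncard : ℝ) ≤ Fintype.card V * h + P.card * (2 * k) := by
      exact_mod_cast hH0c
    refine numeric (Fintype.card V) q Z.card h k _ (Nat.cast_nonneg _) hq1 (Nat.cast_nonneg _)
      (by exact_mod_cast hZ) (by rw [hh]; exact Nat.le_ceil q)
      (by rw [hh]; exact (Nat.ceil_lt_add_one hq0.le).le) (Nat.cast_nonneg _) ?_ ?_ ?_
    · rw [← le_div_iff₀ hq3, hk]
      exact Nat.floor_le (by positivity)
    · rw [← div_le_iff₀ hq3, hk]
      exact (Nat.lt_floor_add_one _).le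
    · rw [hq4]
      linarith
  · intro p hp hreach
    have hEp : E p.1 p.2 hreach = E' p := by simp [E', hreach]
    have hEH : (E p.1 p.2 hreach : Set (Sym2 V)) ⊆ H.edgeSet := by
      rw [hEp]
      intro e he
      exact SimpleGraph.edgeSet_mono hH0 (hUH0 (Finset.mem_coe.2 (Finset.mem_biUnion.2 ⟨p, hp, he⟩)))
    rcases hE3 p.1 p.2 hreach H ((le_sup_left : Hc ≤ H0).trans hH0) hHG hEH with hN | hN
    · refine ⟨hN.choose.reachable, ?_⟩
      exact_mod_cast hN.dist_le
    · exfalso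
      obtain ⟨H', m, h1, h2, h3, h4, h5⟩ := hN
      have hle := hmin H' ⟨hH0.trans h1, h2⟩
      simp only [cost] at hle
      have h4' : (H'.edgeSet.ncard : ℝ) ≤ H.edgeSet.ncard + m := by exact_mod_cast h4
      have h5' : (m : ℝ) * (k + 1) + 18 * ((bad G Z H').card : ℝ)
          ≤ 18 * ((bad G Z H).card : ℝ) := by exact_mod_cast h5
      have h3' : (0 : ℝ) < m := by exact_mod_cast h3
      have h6 : 19 / ((k : ℝ) + 1) * (((bad G Z H).card : ℝ) - (bad G Z H').card) ≤ m := by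
        linarith
      rw [div_mul_eq_mul_div, div_le_iff₀ hkpos] at h6
      nlinarith [mul_pos h3' hkpos]
end

section
/- Let G be a finite undirected unweighted simple graph, let R be a positive integer, and let B be a finite collection of pairs (c, r) with c a vertex and r an integer, r ≥ R, such that every vertex of G belongs to ball_G(c, r) for some (c, r) ∈ B. Let π be a shortest path in G from a vertex s to a vertex t. Then π can be written as a concatenation of consecutive subpaths α_1, α_2, …, α_l, where α_i goes from s_i to t_i (with s_1 = s, t_l = t, and s_{i+1} = t_i), and there exist pairwise distinct pairs (c_1, r_1), …, (c_l, r_l) ∈ B such that for each i: s_i ∈ ball_G(c_i, r_i), t_i ∈ ball_G(c_i, 2 r_i), every vertex of α_i lies in ball_G(c_i, 4 r_i), and moreover l ≤ |π| / R + 1, where |π| is the number of edges of π. -/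
theorem gball_step {V : Type} {G : SimpleGraph V} {c x y : V} {r d : ℕ}
    (hx : x ∈ gball G c r) (h : G.edist x y ≤ (d : ℕ∞)) (e : ℕ) (he : r + d ≤ e) :
    y ∈ gball G c e := by
  have hx' : G.edist c x ≤ (r : ℕ∞) := hx
  show G.edist c y ≤ (e : ℕ∞)
  calc G.edist c y ≤ G.edist c x + G.edist x y := G.edist_triangle
    _ ≤ (r : ℕ∞) + (d : ℕ∞) := add_le_add hx' h
    _ = ((r + d : ℕ) : ℕ∞) := by push_cast; rfl
    _ ≤ (e : ℕ∞) := by exact_mod_cast he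

theorem gball_two {V : Type} {G : SimpleGraph V} {c x y : V} {r r' d : ℕ}
    (hx : x ∈ gball G c r) (hy : y ∈ gball G c r') (h : (d : ℕ∞) ≤ G.edist x y) :
    d ≤ r + r' := by
  have hx' : G.edist c x ≤ (r : ℕ∞) := hx
  have hy' : G.edist c y ≤ (r' : ℕ∞) := hy
  have : (d : ℕ∞) ≤ ((r + r' : ℕ) : ℕ∞) := by
    calc (d : ℕ∞) ≤ G.edist x y := h
      _ ≤ G.edist x c + G.edist c y := G.edist_triangle
      _ = G.edist c x + G.edist c y := by rw [SimpleGraph.edist_comm]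
      _ ≤ (r : ℕ∞) + (r' : ℕ∞) := add_le_add hx' hy'
      _ = _ := by push_cast; rfl
  exact_mod_cast this

theorem partition_aux {V : Type} (G : SimpleGraph V) (R : ℕ) (hR : 0 < R) (B : Finset (V × ℕ))
    (hrad : ∀ p ∈ B, R ≤ p.2)
    (hcover : ∀ v : V, ∃ p ∈ B, v ∈ gball G p.1 p.2)
    (f : ℕ → V) (L : ℕ)
    (hup : ∀ a d, G.edist (f a) (f (a + d)) ≤ (d : ℕ∞))
    (hlow : ∀ a d, a + d ≤ L → (d : ℕ∞) ≤ G.edist (f a) (f (a + d))) :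
    ∀ n a, a + n = L → ∃ (l : ℕ) (j : Fin (l + 1) → ℕ) (c : Fin l → V) (rr : Fin l → ℕ),
      1 ≤ l ∧ j 0 = a ∧ j (Fin.last l) = L ∧
      (∀ i : Fin l, j i.castSucc ≤ j i.succ) ∧
      Function.Injective (fun i : Fin l => (c i, rr i)) ∧
      (∀ i : Fin l,
        (c i, rr i) ∈ B ∧
        f (j i.castSucc) ∈ gball G (c i) (rr i) ∧
        f (j i.succ) ∈ gball G (c i) (2 * rr i) ∧
        ∀ m : ℕ, j i.castSucc ≤ m → m ≤ j i.succ → f m ∈ gball G (c i) (4 * rr i)) ∧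
      (∀ i : Fin l, a ≤ j i.castSucc ∧ j i.castSucc ≤ L) ∧ l * R ≤ n + R := by
  classical
  intro n
  induction n using Nat.strong_induction_on with
  | _ n ih =>
  intro a ha
  obtain ⟨⟨c0, r0⟩, hB, hc⟩ := hcover (f a)
  have hr := hrad _ hB
  simp only at hc hr
  obtain ⟨b, hbL, hab, hb, hmax⟩ : ∃ b, b ≤ L ∧ a ≤ b ∧ f b ∈ gball G c0 (2 * r0) ∧
      ∀ k, b < k → k ≤ L → f k ∉ gball G c0 (2 * r0) := by
    have hPa : f a ∈ gball G c0 (2 * r0) :=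
      gball_step (d := 0) hc (by simpa using hup a 0) _ (by omega)
    have haL : a ≤ L := by omega
    exact ⟨Nat.findGreatest (fun k => f k ∈ gball G c0 (2 * r0)) L, Nat.findGreatest_le L,
      Nat.le_findGreatest haL hPa,
      Nat.findGreatest_spec (P := fun k => f k ∈ gball G c0 (2 * r0)) haL hPa,
      fun k h1 h2 => Nat.findGreatest_is_greatest h1 h2⟩
  have hseg : ∀ m, a ≤ m → m ≤ b → f m ∈ gball G c0 (4 * r0) := by
    intro m h1 h2
    obtain ⟨d, rfl⟩ := Nat.exists_eq_add_of_le h1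
    obtain ⟨e, rfl⟩ := Nat.exists_eq_add_of_le hab
    have := gball_two hc hb (hlow a e hbL)
    exact gball_step hc (hup a d) _ (by omega)
  rcases Nat.lt_or_ge b L with hlt | hge
  · have hnext := hmax (b + 1) (by omega) (by omega)
    have hbr : f b ∉ gball G c0 r0 := fun h =>
      hnext (gball_step h (hup b 1) _ (by omega))
    have hprog : a + r0 ≤ b := by
      by_contra hcon
      obtain ⟨d, hd⟩ := Nat.exists_eq_add_of_le (show a ≤ b + 1 by omega)
      apply hnext
      rw [hd]
      exact gball_step hc (hup a d) _ (by omega)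
    obtain ⟨l, j, c, rr, h1, h2, h3, h4, h5, h6, h7, h8⟩ := ih (L - b) (by omega) b (by omega)
    refine ⟨l + 1, Fin.cons a j, Fin.cons c0 c, Fin.cons r0 rr, by omega, rfl, ?_, ?_, ?_, ?_, ?_, ?_⟩
    · rw [← Fin.succ_last, Fin.cons_succ, h3]
    · intro i
      refine Fin.cases ?_ (fun i => ?_) i
      · simpa [h2] using hab
      · simpa [← Fin.succ_castSucc] using h4 i
    · have hne : ∀ i, (c i, rr i) ≠ (c0, r0) := by
        intro i h
        obtain ⟨e1, e2⟩ := Prod.mk.inj h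
        have hs := (h6 i).2.1
        rw [e1, e2] at hs
        obtain ⟨g1, g2⟩ := h7 i
        rcases Nat.lt_or_ge b (j i.castSucc) with g | g
        · refine hmax _ g g2 ?_
          exact gball_step (d := 0) hs (by simpa using hup (j i.castSucc) 0) _ (by omega)
        · have : j i.castSucc = b := by omega
          rw [this] at hs
          exact hbr hs
      intro x y
      refine Fin.cases ?_ (fun x => ?_) x <;> refine Fin.cases ?_ (fun y => ?_) y
      · intro _; rfl
      · intro h; exact absurd (by simpa using h.symm) (hne y)
      · intro h; exact absurd (by simpa using h) (hne x)
      · intro h; exact congrArg Fin.succ (h5 (by simpa using h))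
    · intro i
      refine Fin.cases ?_ (fun i => ?_) i
      · simp only [Fin.castSucc_zero, Fin.cons_zero, Fin.cons_succ, h2]
        exact ⟨hB, hc, hb, hseg⟩
      · simpa only [← Fin.succ_castSucc, Fin.cons_succ] using h6 i
    · intro i
      refine Fin.cases ?_ (fun i => ?_) i
      · simp only [Fin.castSucc_zero, Fin.cons_zero]
        omega
      · simp only [← Fin.succ_castSucc, Fin.cons_succ]
        have := h7 i
        omega
    · rw [Nat.add_mul]
      omega
  · have hbe : b = L := by omega
    subst hbe
    refine ⟨1, ![a, b], ![c0], ![r0], le_rfl, rfl, rfl, ?_, ?_, ?_, ?_, by omega⟩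
    · intro i; fin_cases i; exact hab
    · exact Function.injective_of_subsingleton _
    · intro i; fin_cases i; exact ⟨hB, hc, hb, hseg⟩
    · intro i; fin_cases i; exact ⟨le_rfl, hab⟩

theorem getVert_edist_le {V : Type} {G : SimpleGraph V} {s t : V} (π : G.Walk s t) (a d : ℕ) :
    G.edist (π.getVert a) (π.getVert (a + d)) ≤ (d : ℕ∞) := by
  induction d with
  | zero => simp
  | succ d ih =>
    have h1 : G.edist (π.getVert (a + d)) (π.getVert (a + d + 1)) ≤ 1 := by
      rcases Nat.lt_or_ge (a + d) π.length with h | h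
      · exact (SimpleGraph.edist_eq_one_iff_adj.2 (π.adj_getVert_succ h)).le
      · rw [π.getVert_of_length_le h, π.getVert_of_length_le (by omega)]
        simp
    calc _ ≤ _ := G.edist_triangle (v := π.getVert (a + d))
      _ ≤ (d : ℕ∞) + 1 := add_le_add ih h1
      _ = _ := by push_cast; rfl

theorem getVert_le_edist {V : Type} {G : SimpleGraph V} {s t : V} (π : G.Walk s t)
    (hshort : π.length = G.dist s t) (a d : ℕ) (h : a + d ≤ π.length) :
    (d : ℕ∞) ≤ G.edist (π.getVert a) (π.getVert (a + d)) := by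
  obtain ⟨e, he⟩ := Nat.exists_eq_add_of_le h
  have h1 := getVert_edist_le π 0 a
  have h2 := getVert_edist_le π (a + d) e
  rw [Nat.zero_add, π.getVert_zero] at h1
  rw [← he, π.getVert_length] at h2
  have h3 : G.edist s t = (π.length : ℕ∞) := by
    rw [hshort]; exact (SimpleGraph.Reachable.coe_dist_eq_edist ⟨π⟩).symm
  have h4 := G.edist_triangle (u := s) (v := π.getVert a) (w := t)
  have h5 := G.edist_triangle (u := π.getVert a) (v := π.getVert (a + d)) (w := t)
  rw [h3, he] at h4
  by_contra hcon
  push Not at hcon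
  obtain ⟨x, hx⟩ := ENat.ne_top_iff_exists.1 hcon.ne_top
  rw [← hx] at h5 hcon
  have h6 : ((a + d + e : ℕ) : ℕ∞) ≤ ((a + (x + e) : ℕ) : ℕ∞) := by
    refine h4.trans ((add_le_add h1 (h5.trans (add_le_add le_rfl h2))).trans ?_)
    push_cast; rfl
  have h7 : a + d + e ≤ a + (x + e) := by exact_mod_cast h6
  have h8 : x < d := by exact_mod_cast hcon
  omega

/-- **Path partitioning by balls.** Let `B` be a collection of balls of radius
at least `R` covering all vertices of `G`, and let `π` be a shortest path from
`s` to `t`. Then `π` can be partitioned into consecutive subpaths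
`α_1, …, α_l` (given by breakpoint positions `j 0 = 0 ≤ j 1 ≤ … ≤ j l = |π|`
along `π`, with the `i`-th subpath going from `s_i = π.getVert (j (i-1))` to
`t_i = π.getVert (j i)`), hosted by pairwise distinct balls
`(c_i, r_i) ∈ B` with `s_i ∈ ball(c_i, r_i)`, `t_i ∈ ball(c_i, 2 r_i)`, every
vertex of `α_i` in `ball(c_i, 4 r_i)`, and `l ≤ |π| / R + 1`. -/
theorem path_partition (V : Type) [Fintype V] (G : SimpleGraph V)
    (R : ℕ) (hR : 0 < R) (B : Finset (V × ℕ))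
    (hrad : ∀ p ∈ B, R ≤ p.2)
    (hcover : ∀ v : V, ∃ p ∈ B, v ∈ gball G p.1 p.2)
    (s t : V) (π : G.Walk s t) (hpath : π.IsPath)
    (hshort : π.length = G.dist s t) :
    ∃ (l : ℕ) (j : Fin (l + 1) → ℕ) (c : Fin l → V) (rr : Fin l → ℕ),
      1 ≤ l ∧
      j 0 = 0 ∧
      j (Fin.last l) = π.length ∧
      (∀ i : Fin l, j i.castSucc ≤ j i.succ) ∧
      Function.Injective (fun i : Fin l => (c i, rr i)) ∧
      (∀ i : Fin l,
        (c i, rr i) ∈ B ∧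
        π.getVert (j i.castSucc) ∈ gball G (c i) (rr i) ∧
        π.getVert (j i.succ) ∈ gball G (c i) (2 * rr i) ∧
        ∀ m : ℕ, j i.castSucc ≤ m → m ≤ j i.succ →
          π.getVert m ∈ gball G (c i) (4 * rr i)) ∧
      (l : ℝ) ≤ (π.length : ℝ) / (R : ℝ) + 1 := by
  obtain ⟨l, j, c, rr, h1, h2, h3, h4, h5, h6, h7, h8⟩ :=
    partition_aux G R hR B hrad hcover π.getVert π.length (getVert_edist_le π)
      (getVert_le_edist π hshort) π.length 0 (by omega)
  refine ⟨l, j, c, rr, h1, h2, h3, h4, h5, h6, ?_⟩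
  have hR' : (0 : ℝ) < R := by exact_mod_cast hR
  have h9 : (l : ℝ) * R ≤ π.length + R := by exact_mod_cast h8
  rw [div_add_one hR'.ne', le_div_iff₀ hR']
  exact h9
end

section
/- Let G be a finite undirected unweighted simple graph and let B₁ be a finite collection of pairs (c, d) with c a vertex and d a nonnegative integer. Call a vertex v covered if v ∈ ball_G(c, d) for some (c, d) ∈ B₁, and covered at boundary if v ∈ ball_G^=(c, d) for every (c, d) ∈ B₁ with v ∈ ball_G(c, d). Let π be a shortest path in G from s to t, and let π[u, v] be a maximal subpath of π all of whose vertices are covered, with u ≠ s and v ≠ t. Then both u and v are covered at boundary. -/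
/-- A vertex is covered by the collection `B₁` of balls if it lies in one of
them. -/
def Covered {V : Type} (G : SimpleGraph V) (B₁ : Finset (V × ℕ)) (v : V) : Prop :=
  ∃ p ∈ B₁, v ∈ gball G p.1 p.2

/-- A vertex is covered at boundary by `B₁` if it lies on the boundary of
every ball of `B₁` containing it. -/
def CoveredAtBoundary {V : Type} (G : SimpleGraph V) (B₁ : Finset (V × ℕ))
    (v : V) : Prop :=
  ∀ p ∈ B₁, v ∈ gball G p.1 p.2 → v ∈ gsphere G p.1 p.2

/-- A neighbour of a covered vertex that is strictly inside some ball is covered. -/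
theorem covered_of_adj_interior {V : Type} (G : SimpleGraph V) (B₁ : Finset (V × ℕ))
    {x y : V} (hadj : G.Adj x y) (p : V × ℕ) (hp : p ∈ B₁)
    (hx : x ∈ gball G p.1 p.2) (hn : x ∉ gsphere G p.1 p.2) : Covered G B₁ y := by
  refine ⟨p, hp, ?_⟩
  have hlt : G.edist p.1 x < (p.2 : ℕ∞) := lt_of_le_of_ne hx hn
  have h1 : G.edist x y = 1 := SimpleGraph.edist_eq_one_iff_adj.mpr hadj
  have htri : G.edist p.1 y ≤ G.edist p.1 x + G.edist x y := SimpleGraph.edist_triangle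
  rw [h1] at htri
  exact htri.trans (Order.add_one_le_of_lt hlt)

/-- **Boundary claim.** Let `π` be a shortest path from `s` to `t` and let
`π[u, v]` be a maximal covered subpath of `π` (given by positions
`a ≤ b ≤ |π|` along `π`, with `u = π.getVert a` and `v = π.getVert b`), with
`u ≠ s` and `v ≠ t`. Then both `u` and `v` are covered at boundary by `B₁`. -/
theorem boundary_of_maximal_covered_subpath
    (V : Type) [Fintype V] (G : SimpleGraph V) (B₁ : Finset (V × ℕ))
    (s t : V) (π : G.Walk s t) (hpath : π.IsPath)
    (hshort : π.length = G.dist s t)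
    (a b : ℕ) (hab : a ≤ b) (hb : b ≤ π.length)
    (hcov : ∀ m : ℕ, a ≤ m → m ≤ b → Covered G B₁ (π.getVert m))
    (hu : π.getVert a ≠ s) (hv : π.getVert b ≠ t)
    (hmax : ∀ a' b' : ℕ, a' ≤ a → b ≤ b' → b' ≤ π.length →
      (∀ m : ℕ, a' ≤ m → m ≤ b' → Covered G B₁ (π.getVert m)) →
      a' = a ∧ b' = b) :
    CoveredAtBoundary G B₁ (π.getVert a) ∧
    CoveredAtBoundary G B₁ (π.getVert b) := by
  constructor
  · intro p hp hin
    by_contra hn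
    have ha : a ≠ 0 := by
      rintro rfl
      exact hu (by simp)
    have hadj : G.Adj (π.getVert (a - 1)) (π.getVert (a - 1 + 1)) :=
      π.adj_getVert_succ (by omega)
    rw [show a - 1 + 1 = a by omega] at hadj
    have hc := covered_of_adj_interior G B₁ hadj.symm p hp hin hn
    have := (hmax (a - 1) b (by omega) le_rfl hb (by
      intro m h1 h2
      rcases Nat.lt_or_ge m a with h | h
      · rwa [show m = a - 1 by omega]
      · exact hcov m h h2)).1
    omega
  · intro p hp hin
    by_contra hn
    have hbl : b ≠ π.length := by
      rintro rfl
      exact hv (by simp)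
    have hadj : G.Adj (π.getVert b) (π.getVert (b + 1)) :=
      π.adj_getVert_succ (by omega)
    have hc := covered_of_adj_interior G B₁ hadj p hp hin hn
    have := (hmax a (b + 1) le_rfl (by omega) (by omega) (by
      intro m h1 h2
      rcases Nat.lt_or_ge b m with h | h
      · rwa [show m = b + 1 by omega]
      · exact hcov m h1 h)).2
    omega
end
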